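/- Let ρ : [0,2π] → ℝ⁺ be a probability density with ρ_min := min_{θ∈[0,2π]} ρ(θ) > 0, and let K^(ρ) be Kac's walk on SO(n) with angle density ρ. Then for every integer n ≥ 2 and all probability measures μ, ν on SO(n), W_{D,2}(μK^(ρ), νK^(ρ)) ≤ √(1 − 2π·ρ_min/C(n,2)) · W_{D,2}(μ, ν). -/

import Mathlib

open MeasureTheory ENNReal Filter Topology Matrix

noncomputable section

/-- The (Borel) product measurable structure on matrices. -/
instance matrixMeasurableSpace {m n R : Type*} [MeasurableSpace R] :
    MeasurableSpace (Matrix m n R) :=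
  (inferInstance : MeasurableSpace (m → n → R))

/-- `η` is a coupling of `μ` and `ν`: its two marginals are `μ` and `ν`. -/
def IsCoupling {X : Type*} [MeasurableSpace X] (η : Measure (X × X)) (μ ν : Measure X) : Prop :=
  η.map Prod.fst = μ ∧ η.map Prod.snd = ν

/-- The `L^p` transportation cost (Wasserstein) distance associated with the distance
function `d`, with values in `ℝ≥0∞`:
`W_{d,p}(μ,ν) = inf { (∫ d(x,y)^p dη)^{1/p} : η a coupling of (μ,ν) }`. -/
def wassersteinE {X : Type*} [MeasurableSpace X] (d : X → X → ℝ≥0∞) (p : ℝ)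
    (μ ν : Measure X) : ℝ≥0∞ :=
  ⨅ (η : Measure (X × X)) (_ : IsCoupling η μ ν), (∫⁻ z, d z.1 z.2 ^ p ∂η) ^ (1 / p)

/-- The length of the curve `γ` over `[0,1]`, w.r.t. the distance function `d`:
the supremum, over all partitions `0 = t 0 ≤ t 1 ≤ ⋯ ≤ t k = 1` of `[0,1]`, of the sums of
the distances between consecutive points of the curve. -/
def pathLengthE {X : Type*} (d : X → X → ℝ≥0∞) (γ : ℝ → X) : ℝ≥0∞ :=
  ⨆ (k : ℕ) (t : Fin (k + 1) → ℝ) (_ : Monotone t) (_ : t 0 = 0) (_ : t (Fin.last k) = 1),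
    ∑ i : Fin k, d (γ (t i.castSucc)) (γ (t i.succ))

/-- The intrinsic (length) distance on the set `S` induced by the distance function `d`:
the infimum of `d`-lengths of continuous paths joining `a` to `b` inside `S`. -/
def intrinsicDistE {X : Type*} [TopologicalSpace X] (d : X → X → ℝ≥0∞) (S : Set X)
    (a b : X) : ℝ≥0∞ :=
  ⨅ (γ : ℝ → X) (_ : ContinuousOn γ (Set.Icc 0 1)) (_ : Set.MapsTo γ (Set.Icc 0 1) S)
    (_ : γ 0 = a) (_ : γ 1 = b), pathLengthE d γ

/-- `t` iterated steps of the Markov transition kernel `P`, started from the initial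
distribution `μ` (so `kernelIterate P t μ = μP^t`). -/
def kernelIterate {X : Type*} [MeasurableSpace X] (P : X → Measure X) :
    ℕ → Measure X → Measure X
  | 0, μ => μ
  | t + 1, μ => (kernelIterate P t μ).bind P

/-- A Haar probability measure for the multiplicative set `S`, viewed as a measure on the
ambient space: a probability measure carried by `S` that is invariant under left and right
translations by all elements of `S`. -/
def IsHaarLike {X : Type*} [MeasurableSpace X] [Mul X] (S : Set X) (μ : Measure X) : Prop :=
  IsProbabilityMeasure μ ∧ μ Sᶜ = 0 ∧
    ∀ a ∈ S, μ.map (fun x => a * x) = μ ∧ μ.map (fun x => x * a) = μ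

/-- The Haar probability measure of a compact matrix group `S` (such as `SO(n)` or `U(n)`),
viewed as a measure on the ambient matrix space.  For such `S` a translation-invariant
probability measure exists and is unique, so `haarLike S` is *the* Haar probability
measure of `S`. -/
def haarLike {X : Type*} [MeasurableSpace X] [Mul X] (S : Set X) : Measure X := by
  classical exact if h : ∃ μ, IsHaarLike S μ then h.choose else 0

/-- The set of pairs `1 ≤ i < j ≤ n` of indices. -/
def pairs (n : ℕ) : Finset (Fin n × Fin n) :=
  Finset.univ.filter fun p => p.1 < p.2

/-- The special orthogonal group `SO(n)`, as a subset of the `n × n` real matrices. -/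
def SO (n : ℕ) : Set (Matrix (Fin n) (Fin n) ℝ) :=
  {a | a * aᵀ = 1 ∧ a.det = 1}

/-- The Hilbert–Schmidt (Frobenius) distance `‖a - b‖_hs = √(Tr((a-b)ᵀ(a-b)))` between real
matrices, as an `ℝ≥0∞`-valued distance function. -/
def hsDist {n : ℕ} (a b : Matrix (Fin n) (Fin n) ℝ) : ℝ≥0∞ :=
  ENNReal.ofReal (Real.sqrt (Matrix.trace ((a - b)ᵀ * (a - b))))

/-- The intrinsic (Riemannian/length) metric `D` on `SO(n)` induced by the Hilbert–Schmidt
norm: the infimum of `hs`-lengths of continuous paths inside `SO(n)`. -/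
def DSO (n : ℕ) (a b : Matrix (Fin n) (Fin n) ℝ) : ℝ≥0∞ :=
  intrinsicDistE hsDist (SO n) a b

/-- The rotation `R(i,j,θ)` by the angle `θ` of the plane spanned by the `i`-th and `j`-th
canonical basis vectors: `R e_i = cos θ e_i + sin θ e_j`, `R e_j = cos θ e_j - sin θ e_i`,
and `R e_k = e_k` for `k ∉ {i,j}`. -/
def kacRot {n : ℕ} (i j : Fin n) (θ : ℝ) : Matrix (Fin n) (Fin n) ℝ :=
  Matrix.of fun k l =>
    if k = i ∧ l = i then Real.cos θ
    else if k = j ∧ l = i then Real.sin θ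
    else if k = i ∧ l = j then -Real.sin θ
    else if k = j ∧ l = j then Real.cos θ
    else if k = l then 1 else 0

/-- The measure on angles with density `ρ` with respect to Lebesgue measure on `[0, 2π]`. -/
def angleMeasure (ρ : ℝ → ℝ) : Measure ℝ :=
  (MeasureTheory.volume.restrict (Set.Icc 0 (2 * Real.pi))).withDensity
    fun θ => ENNReal.ofReal (ρ θ)

/-- The transition kernel of Kac's random walk on `SO(n)` with angle density `ρ`:
`K^{(ρ)}_x = (1/C(n,2)) ∑_{1≤i<j≤n} ∫₀^{2π} δ_{R(i,j,θ)·x} ρ(θ) dθ`. -/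
def kacKernelRho (n : ℕ) (ρ : ℝ → ℝ) (x : Matrix (Fin n) (Fin n) ℝ) :
    Measure (Matrix (Fin n) (Fin n) ℝ) :=
  (n.choose 2 : ℝ≥0∞)⁻¹ •
    ∑ p ∈ pairs n, (angleMeasure ρ).map fun θ => kacRot p.1 p.2 θ * x

/-!
Let the walks from `x` and `y` rotate the same random plane `p`, and split the angle density into a
constant `r` and the excess `ρ - r`. Under the excess the two angles agree, and bi-invariance keeps
`D` unchanged. Under the constant part, of mass `2πr`, the second angle is shifted by an amount
`s p` depending on `x`, `y` and `p`, which is harmless since the uniform law on the circle is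
translation invariant. It remains to find shifts with
`∑ p, D(x, R_p(s p) y)² ≤ (C(n,2) - 1) D(x, y)²`.

Infinitesimally this is Pythagoras: `y xᵀ - 1` is nearly skew-symmetric, and the best rotation of
the plane `(i, j)` removes its `(i, j)` component, so that each component is counted `C(n,2) - 1`
times. The infimum over the shifts of `(∑ p, D(x, R_p(s p) y)²)^(1/2)` satisfies the triangle
inequality by Minkowski, so the local estimate integrates along paths to a global one. The Cayley
transform shows that `D` is locally comparable to the Frobenius norm with constants tending to `1`.
Hence `D` is continuous on `SO(n)`, and shifts which are optimal up to `ε` can be chosen measurably.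
-/

section IntrinsicDistance

variable {X Y : Type*} [PseudoEMetricSpace X] [PseudoEMetricSpace Y] {S : Set X} {T : Set Y}
  {a b : X} {γ : ℝ → X} {C : ℝ≥0∞}

theorem pathLengthE_edist_le_eVariationOn (γ : ℝ → X) :
    pathLengthE edist γ ≤ eVariationOn γ (Set.Icc 0 1) := by
  refine iSup_le fun k => iSup_le fun t => iSup_le fun ht => iSup_le fun h0 => iSup_le fun h1 => ?_
  let u : ℕ → ℝ := fun i => t ⟨min i k, by omega⟩
  have hu : Monotone u := fun i j hij => ht (by simp only [Fin.mk_le_mk]; omega)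
  have hmem : ∀ i, u i ∈ Set.Icc (0 : ℝ) 1 := fun i =>
    ⟨h0 ▸ ht (Fin.zero_le _), h1 ▸ ht (Fin.le_last _)⟩
  refine le_trans (le_of_eq ?_) (eVariationOn.sum_le (f := γ) (n := k) hu hmem)
  rw [Finset.sum_range]
  refine Finset.sum_congr rfl fun i _ => ?_
  rw [edist_comm]
  congr 3 <;> ext <;> simp

-- The points of `eVariationOn` need not include `0` and `1`: they are added at both ends.
theorem eVariationOn_le_pathLengthE_edist (γ : ℝ → X) :
    eVariationOn γ (Set.Icc 0 1) ≤ pathLengthE edist γ := by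
  refine iSup_le fun ⟨k, u, hu, hmem⟩ => ?_
  let t : Fin (k + 2 + 1) → ℝ := fun i =>
    if i.1 = 0 then 0 else if i.1 = k + 2 then 1 else u (i.1 - 1)
  have ht : Monotone t := by
    intro i j (hle : i.1 ≤ j.1)
    have := i.2
    have := j.2
    simp only [t]
    split_ifs
    all_goals first
      | omega
      | exact le_rfl
      | exact zero_le_one
      | exact (hmem _).1
      | exact (hmem _).2
      | exact hu (by omega)
  refine le_trans ?_ (le_iSup_of_le (k + 2) <| le_iSup_of_le t <| le_iSup_of_le ht <|
    le_iSup_of_le (by simp [t]) <| le_iSup_of_le (by simp [t]) le_rfl)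
  rw [Fin.sum_univ_succ, Fin.sum_univ_castSucc, Finset.sum_range]
  refine le_trans (le_trans (le_of_eq ?_) le_self_add) le_add_self
  refine Finset.sum_congr rfl fun i _ => ?_
  have := i.2
  rw [edist_comm]
  congr 2 <;> simp [t] <;> omega

theorem pathLengthE_edist (γ : ℝ → X) : pathLengthE edist γ = eVariationOn γ (Set.Icc 0 1) :=
  (pathLengthE_edist_le_eVariationOn γ).antisymm (eVariationOn_le_pathLengthE_edist γ)

theorem intrinsicDistE_le_eVariationOn (hγ : ContinuousOn γ (Set.Icc 0 1))
    (hS : Set.MapsTo γ (Set.Icc 0 1) S) :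
    intrinsicDistE edist S (γ 0) (γ 1) ≤ eVariationOn γ (Set.Icc 0 1) :=
  pathLengthE_edist γ ▸ iInf_le_of_le γ (iInf_le_of_le hγ <| iInf_le_of_le hS <|
    iInf_le_of_le rfl <| iInf_le_of_le rfl le_rfl)

theorem le_intrinsicDistE (h : ∀ γ : ℝ → X, ContinuousOn γ (Set.Icc 0 1) →
      Set.MapsTo γ (Set.Icc 0 1) S → γ 0 = a → γ 1 = b → C ≤ eVariationOn γ (Set.Icc 0 1)) :
    C ≤ intrinsicDistE edist S a b :=
  le_iInf fun γ => le_iInf fun hγ => le_iInf fun hS => le_iInf fun h0 => le_iInf fun h1 =>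
    pathLengthE_edist γ ▸ h γ hγ hS h0 h1

theorem exists_path_of_intrinsicDistE_lt (h : intrinsicDistE edist S a b < C) :
    ∃ γ : ℝ → X, ContinuousOn γ (Set.Icc 0 1) ∧ Set.MapsTo γ (Set.Icc 0 1) S ∧ γ 0 = a ∧ γ 1 = b ∧
      eVariationOn γ (Set.Icc 0 1) < C := by
  contrapose! h
  exact le_intrinsicDistE h

theorem intrinsicDistE_map_le {f : X → Y} (hf : LipschitzOnWith 1 f S) (hST : Set.MapsTo f S T)
    (a b : X) : intrinsicDistE edist T (f a) (f b) ≤ intrinsicDistE edist S a b := by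
  refine le_intrinsicDistE fun γ hγ hS h0 h1 => ?_
  subst h0 h1
  refine (intrinsicDistE_le_eVariationOn (γ := f ∘ γ) (hf.continuousOn.comp hγ hS)
    (hST.comp hS)).trans ?_
  simpa using hf.comp_eVariationOn_le hS

theorem intrinsicDistE_le_of_lipschitzOnWith {K : NNReal} (hγ : LipschitzOnWith K γ (Set.Icc 0 1))
    (hS : Set.MapsTo γ (Set.Icc 0 1) S) : intrinsicDistE edist S (γ 0) (γ 1) ≤ K := by
  refine (intrinsicDistE_le_eVariationOn hγ.continuousOn hS).trans ?_
  refine (hγ.comp_eVariationOn_le (g := id) (Set.mapsTo_id _)).trans_eq ?_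
  have h := (monotone_id.monotoneOn (Set.Icc (0 : ℝ) 1)).eVariationOn_eq
    (Set.left_mem_Icc.mpr zero_le_one) (Set.right_mem_Icc.mpr zero_le_one)
  rw [Set.inter_self] at h
  simp [h]

theorem exists_path_trans {γ₁ γ₂ : ℝ → X} (hγ₁ : ContinuousOn γ₁ (Set.Icc 0 1))
    (hγ₂ : ContinuousOn γ₂ (Set.Icc 0 1)) (hS₁ : Set.MapsTo γ₁ (Set.Icc 0 1) S)
    (hS₂ : Set.MapsTo γ₂ (Set.Icc 0 1) S) (h : γ₁ 1 = γ₂ 0) :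
    ∃ γ : ℝ → X, ContinuousOn γ (Set.Icc 0 1) ∧ Set.MapsTo γ (Set.Icc 0 1) S ∧ γ 0 = γ₁ 0 ∧
      γ 1 = γ₂ 1 ∧ eVariationOn γ (Set.Icc 0 1) ≤
        eVariationOn γ₁ (Set.Icc 0 1) + eVariationOn γ₂ (Set.Icc 0 1) := by
  let γ : ℝ → X := fun t => if t ≤ 1 / 2 then γ₁ (2 * t) else γ₂ (2 * t - 1)
  have eq₁ : Set.EqOn γ (γ₁ ∘ fun t => 2 * t) (Set.Icc 0 (1 / 2)) := fun t ht => if_pos ht.2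
  have eq₂ : Set.EqOn γ (γ₂ ∘ fun t => 2 * t - 1) (Set.Icc (1 / 2) 1) := by
    rintro t ⟨ht, -⟩
    rcases ht.eq_or_lt with rfl | ht
    · simp [γ, h]
    · exact if_neg ht.not_ge
  have maps₁ : Set.MapsTo (fun t : ℝ => 2 * t) (Set.Icc 0 (1 / 2)) (Set.Icc 0 1) :=
    fun t ht => ⟨by linarith [ht.1], by linarith [ht.2]⟩
  have maps₂ : Set.MapsTo (fun t : ℝ => 2 * t - 1) (Set.Icc (1 / 2) 1) (Set.Icc 0 1) :=
    fun t ht => ⟨by linarith [ht.1], by linarith [ht.2]⟩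
  have hU : Set.Icc (0 : ℝ) (1 / 2) ∪ Set.Icc (1 / 2) 1 = Set.Icc 0 1 :=
    Set.Icc_union_Icc_eq_Icc (by norm_num) (by norm_num)
  refine ⟨γ, ?_, ?_, by simp [γ], by norm_num [γ], ?_⟩
  · rw [← hU]
    exact ((hγ₁.comp (by fun_prop) maps₁).congr eq₁).union_of_isClosed
      ((hγ₂.comp (by fun_prop) maps₂).congr eq₂) isClosed_Icc isClosed_Icc
  · rw [← hU]
    exact ((hS₁.comp maps₁).congr eq₁.symm).union ((hS₂.comp maps₂).congr eq₂.symm)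
  · rw [← hU, eVariationOn.union γ (x := 1 / 2) (isGreatest_Icc (by norm_num))
      (isLeast_Icc (by norm_num)), eVariationOn.congr eq₁, eVariationOn.congr eq₂, hU]
    gcongr
    · exact eVariationOn.comp_le_of_monotoneOn _ _ (fun s _ t _ hst => by simpa using hst) maps₁
    · exact eVariationOn.comp_le_of_monotoneOn _ _ (fun s _ t _ hst => by simpa using hst) maps₂

theorem intrinsicDistE_triangle (a b c : X) :
    intrinsicDistE edist S a c ≤ intrinsicDistE edist S a b + intrinsicDistE edist S b c := by
  refine ENNReal.le_of_forall_pos_le_add fun ε hε hfin => ?_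
  have hε' : (ε / 2 : ℝ≥0∞) ≠ 0 := by simp [hε.ne']
  obtain ⟨hab, hbc⟩ := ENNReal.add_lt_top.mp hfin
  obtain ⟨γ₁, hγ₁, hS₁, rfl, h₁, hlt₁⟩ :=
    exists_path_of_intrinsicDistE_lt (ENNReal.lt_add_right hab.ne hε')
  obtain ⟨γ₂, hγ₂, hS₂, h₂, rfl, hlt₂⟩ :=
    exists_path_of_intrinsicDistE_lt (ENNReal.lt_add_right hbc.ne hε')
  obtain ⟨γ, hγ, hS, h0, h1, hle⟩ := exists_path_trans hγ₁ hγ₂ hS₁ hS₂ (h₁.trans h₂.symm)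
  calc intrinsicDistE edist S (γ₁ 0) (γ₂ 1)
      ≤ eVariationOn γ (Set.Icc 0 1) := h0 ▸ h1 ▸ intrinsicDistE_le_eVariationOn hγ hS
    _ ≤ _ := hle.trans (add_le_add hlt₁.le hlt₂.le)
    _ = _ := by rw [add_add_add_comm, ENNReal.add_halves]

theorem exists_partition_edist_lt (hγ : ContinuousOn γ (Set.Icc 0 1)) {h : ℝ≥0∞} (hh : h ≠ 0) :
    ∃ (t : ℕ → ℝ) (m : ℕ), Monotone t ∧ (∀ k, t k ∈ Set.Icc (0 : ℝ) 1) ∧ t 0 = 0 ∧ t m = 1 ∧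
      ∀ k, edist (γ (t k)) (γ (t (k + 1))) < h := by
  let ball (u : Set.Icc (0 : ℝ) 1) : Set (Set.Icc (0 : ℝ) 1) :=
    (fun v : Set.Icc (0 : ℝ) 1 => γ v) ⁻¹' Metric.eball (γ u) (h / 2)
  obtain ⟨t, ht0, hmono, ⟨m, hm⟩, hball⟩ :=
    exists_monotone_Icc_subset_open_cover_Icc zero_le_one (c := ball)
      (fun u => Metric.isOpen_eball.preimage (continuousOn_iff_continuous_domRestrict.mp hγ))
      fun u _ => Set.mem_iUnion.mpr ⟨u, Metric.mem_eball_self (ENNReal.half_pos hh)⟩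
  refine ⟨fun k => t k, m, hmono, fun k => (t k).2, by simp [ht0], by simp [hm m le_rfl],
    fun k => ?_⟩
  obtain ⟨u, hu⟩ := hball k
  have hk : edist (γ (t k)) (γ u) < h / 2 := hu (Set.left_mem_Icc.mpr (hmono k.le_succ))
  have hk' : edist (γ (t (k + 1))) (γ u) < h / 2 := hu (Set.right_mem_Icc.mpr (hmono k.le_succ))
  calc edist (γ (t k)) (γ (t (k + 1)))
      ≤ edist (γ (t k)) (γ u) + edist (γ (t (k + 1))) (γ u) := edist_triangle_right _ _ _
    _ < h / 2 + h / 2 := ENNReal.add_lt_add hk hk'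
    _ = h := ENNReal.add_halves h

theorem le_mul_intrinsicDistE_of_local {E : X → X → ℝ≥0∞} {K h : ℝ≥0∞} (hK : K ≠ 0) (hK' : K ≠ ⊤)
    (hh : h ≠ 0) (refl : ∀ x ∈ S, E x x = 0)
    (triangle : ∀ x ∈ S, ∀ y ∈ S, ∀ z ∈ S, E x z ≤ E x y + E y z)
    (local_le : ∀ x ∈ S, ∀ y ∈ S, edist x y < h → E x y ≤ K * edist x y) (a b : X) :
    E a b ≤ K * intrinsicDistE edist S a b := by
  rw [← ENNReal.div_le_iff' hK hK']
  refine le_intrinsicDistE fun γ hγ hS h0 h1 => ?_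
  obtain ⟨t, m, hmono, ht, ht0, htm, hstep⟩ := exists_partition_edist_lt hγ hh
  have chain (k : ℕ) : E a (γ (t k)) ≤
      K * ∑ l ∈ Finset.range k, edist (γ (t (l + 1))) (γ (t l)) := by
    induction k with
    | zero => simp [ht0, ← h0, refl _ (hS (Set.left_mem_Icc.mpr zero_le_one))]
    | succ k ih =>
      rw [Finset.sum_range_succ, mul_add, edist_comm (γ (t (k + 1)))]
      exact (triangle a (h0 ▸ hS (Set.left_mem_Icc.mpr zero_le_one)) _ (hS (ht k)) _
        (hS (ht (k + 1)))).trans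
          (add_le_add ih (local_le _ (hS (ht k)) _ (hS (ht (k + 1))) (hstep k)))
  refine ENNReal.div_le_of_le_mul' ?_
  calc E a b ≤ K * ∑ l ∈ Finset.range m, edist (γ (t (l + 1))) (γ (t l)) := by
        simpa [htm, h1] using chain m
    _ ≤ K * eVariationOn γ (Set.Icc 0 1) := by gcongr; exact eVariationOn.sum_le hmono ht

end IntrinsicDistance

section FrobeniusNorm

open scoped Matrix.Norms.Frobenius

variable {l m : Type*} [Fintype l] [Fintype m] {n : ℕ} {a b : Matrix (Fin n) (Fin n) ℝ}

theorem sq_frobenius_norm_eq_trace (x : Matrix m l ℝ) : ‖x‖ ^ 2 = trace (xᵀ * x) := by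
  rw [frobenius_norm_def, ← Real.sqrt_eq_rpow, Real.sq_sqrt (by positivity)]
  simp only [trace, diag, mul_apply, transpose_apply, Real.norm_eq_abs, Real.rpow_two, sq_abs]
  rw [Finset.sum_comm]
  simp only [sq]

theorem hsDist_eq_edist : (hsDist : Matrix (Fin n) (Fin n) ℝ → _ → _) = edist := by
  ext x y
  rw [hsDist, edist_dist, dist_eq_norm, ← sq_frobenius_norm_eq_trace, Real.sqrt_sq (norm_nonneg _)]

theorem one_mem_SO : (1 : Matrix (Fin n) (Fin n) ℝ) ∈ SO n := by simp [SO]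

theorem mul_mem_SO (ha : a ∈ SO n) (hb : b ∈ SO n) : a * b ∈ SO n := by
  refine ⟨?_, by rw [det_mul, ha.2, hb.2, one_mul]⟩
  rw [transpose_mul, Matrix.mul_assoc, ← Matrix.mul_assoc b, hb.1, Matrix.one_mul, ha.1]

theorem transpose_mem_SO (ha : a ∈ SO n) : aᵀ ∈ SO n :=
  ⟨by rw [transpose_transpose]; exact mul_eq_one_comm.mp ha.1, by rw [det_transpose, ha.2]⟩

theorem transpose_mul_self_of_mem_SO (ha : a ∈ SO n) : aᵀ * a = 1 := mul_eq_one_comm.mp ha.1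

theorem mul_transpose_mul_cancel_of_mem_SO (ha : a ∈ SO n) (x : Matrix (Fin n) (Fin n) ℝ) :
    x * aᵀ * a = x := by
  rw [Matrix.mul_assoc, transpose_mul_self_of_mem_SO ha, Matrix.mul_one]

theorem norm_mul_left_of_mem_SO (ha : a ∈ SO n) (x : Matrix (Fin n) (Fin n) ℝ) :
    ‖a * x‖ = ‖x‖ := by
  rw [← sq_eq_sq₀ (norm_nonneg _) (norm_nonneg _), sq_frobenius_norm_eq_trace,
    sq_frobenius_norm_eq_trace, transpose_mul, Matrix.mul_assoc, ← Matrix.mul_assoc aᵀ,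
    transpose_mul_self_of_mem_SO ha, Matrix.one_mul]

theorem norm_mul_right_of_mem_SO (ha : a ∈ SO n) (x : Matrix (Fin n) (Fin n) ℝ) :
    ‖x * a‖ = ‖x‖ := by
  rw [← frobenius_norm_transpose, transpose_mul, norm_mul_left_of_mem_SO (transpose_mem_SO ha),
    frobenius_norm_transpose]

theorem isCompact_SO : IsCompact (SO n) := by
  refine Metric.isCompact_of_isClosed_isBounded ?_ ?_
  · exact (isClosed_eq (continuous_id.matrix_mul continuous_id.matrix_transpose)
      continuous_const).inter (isClosed_eq continuous_id.matrix_det continuous_const)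
  · refine isBounded_iff_forall_norm_le.mpr ⟨‖(1 : Matrix (Fin n) (Fin n) ℝ)‖, fun a ha => ?_⟩
    rw [← Matrix.mul_one a, norm_mul_left_of_mem_SO ha]

theorem DSO_eq_intrinsicDistE : DSO n = intrinsicDistE edist (SO n) := by
  ext x y
  rw [DSO, hsDist_eq_edist]

theorem DSO_triangle (x y z : Matrix (Fin n) (Fin n) ℝ) : DSO n x z ≤ DSO n x y + DSO n y z :=
  DSO_eq_intrinsicDistE (n := n) ▸ intrinsicDistE_triangle x y z

theorem DSO_map_le {f : Matrix (Fin n) (Fin n) ℝ → Matrix (Fin n) (Fin n) ℝ}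
    (hf : ∀ x y, ‖f x - f y‖ ≤ ‖x - y‖) (hS : Set.MapsTo f (SO n) (SO n))
    (x y : Matrix (Fin n) (Fin n) ℝ) : DSO n (f x) (f y) ≤ DSO n x y := by
  rw [DSO_eq_intrinsicDistE]
  refine intrinsicDistE_map_le (LipschitzWith.lipschitzOnWith ?_) hS x y
  exact LipschitzWith.of_dist_le_mul fun x y => by
    simpa [dist_eq_norm] using hf x y

theorem DSO_mul_left (ha : a ∈ SO n) (x y : Matrix (Fin n) (Fin n) ℝ) :
    DSO n (a * x) (a * y) = DSO n x y := by
  have le {b} (hb : b ∈ SO n) (x y) : DSO n (b * x) (b * y) ≤ DSO n x y :=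
    DSO_map_le (fun x y => by rw [← Matrix.mul_sub, norm_mul_left_of_mem_SO hb])
      (fun _ => mul_mem_SO hb) x y
  refine (le ha x y).antisymm ?_
  simpa [← Matrix.mul_assoc, transpose_mul_self_of_mem_SO ha] using
    le (transpose_mem_SO ha) (a * x) (a * y)

theorem DSO_mul_right (ha : a ∈ SO n) (x y : Matrix (Fin n) (Fin n) ℝ) :
    DSO n (x * a) (y * a) = DSO n x y := by
  have le {b} (hb : b ∈ SO n) (x y) : DSO n (x * b) (y * b) ≤ DSO n x y :=
    DSO_map_le (fun x y => by rw [← Matrix.sub_mul, norm_mul_right_of_mem_SO hb])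
      (fun _ hx => mul_mem_SO hx hb) x y
  refine (le ha x y).antisymm ?_
  simpa [Matrix.mul_assoc, ha.1] using le (transpose_mem_SO ha) (x * a) (y * a)

-- Transposition is an isometry of `SO(n)` which inverts the group, so by bi-invariance
-- `D(y, x) = D(yᵀ, xᵀ) = D(x yᵀ y, x xᵀ y) = D(x, y)`.
theorem DSO_comm (hx : x ∈ SO n) (hy : y ∈ SO n) : DSO n x y = DSO n y x := by
  have le {x y} (hx : x ∈ SO n) (hy : y ∈ SO n) : DSO n x y ≤ DSO n y x := by
    calc DSO n x y = DSO n (x * yᵀ * y) (x * xᵀ * y) := by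
          rw [mul_transpose_mul_cancel_of_mem_SO hy, hx.1, Matrix.one_mul]
      _ = DSO n yᵀ xᵀ := by rw [DSO_mul_right hy, DSO_mul_left hx]
      _ ≤ DSO n y x := DSO_map_le (f := transpose)
          (fun x y => by rw [← transpose_sub, frobenius_norm_transpose])
          (fun _ => transpose_mem_SO) y x
  exact (le hx hy).antisymm (le hy hx)

end FrobeniusNorm

section Cayley

open scoped Matrix.Norms.Frobenius

variable {m : Type*} [Fintype m] [DecidableEq m] {n : ℕ} {A : Matrix m m ℝ}
  {g : Matrix (Fin n) (Fin n) ℝ}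

theorem norm_le_norm_one_sub_mul_of_skew (hA : Aᵀ = -A) (x : Matrix m m ℝ) :
    ‖x‖ ≤ ‖(1 - A) * x‖ := by
  have pythagoras : ‖(1 - A) * x‖ ^ 2 = ‖x‖ ^ 2 + ‖A * x‖ ^ 2 := by
    simp only [sq_frobenius_norm_eq_trace, ← trace_add, transpose_mul, transpose_sub,
      transpose_one, hA]
    congr 1
    noncomm_ring
  exact le_of_sq_le_sq (by nlinarith [sq_nonneg ‖A * x‖]) (norm_nonneg _)

theorem isUnit_det_of_forall_mul_eq_zero {P : Matrix m m ℝ}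
    (hP : ∀ x : Matrix m m ℝ, P * x = 0 → x = 0) : IsUnit P.det := by
  have hinj : Function.Injective (LinearMap.mulLeft ℝ P) :=
    (injective_iff_map_eq_zero _).mpr hP
  obtain ⟨x, hx⟩ := LinearMap.injective_iff_surjective.mp hinj 1
  exact isUnit_det_of_right_inverse hx

theorem isUnit_det_one_sub_of_skew (hA : Aᵀ = -A) : IsUnit (1 - A).det :=
  isUnit_det_of_forall_mul_eq_zero fun x hx =>
    norm_le_zero_iff.mp <| by simpa [hx] using norm_le_norm_one_sub_mul_of_skew hA x

theorem norm_inv_one_sub_mul_le_of_skew (hA : Aᵀ = -A) (x : Matrix m m ℝ) :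
    ‖(1 - A)⁻¹ * x‖ ≤ ‖x‖ := by
  simpa [mul_nonsing_inv_cancel_left _ _ (isUnit_det_one_sub_of_skew hA)] using
    norm_le_norm_one_sub_mul_of_skew hA ((1 - A)⁻¹ * x)

theorem norm_mul_inv_one_sub_le_of_skew (hA : Aᵀ = -A) (x : Matrix m m ℝ) :
    ‖x * (1 - A)⁻¹‖ ≤ ‖x‖ := by
  have h := norm_inv_one_sub_mul_le_of_skew (A := Aᵀ) (by rw [hA, transpose_neg, hA]) xᵀ
  rwa [← transpose_one, ← transpose_sub, ← transpose_nonsing_inv, ← transpose_mul,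
    frobenius_norm_transpose, frobenius_norm_transpose] at h

/-- The Cayley transform, which maps skew-symmetric matrices to special orthogonal ones. -/
def cayley (A : Matrix m m ℝ) : Matrix m m ℝ := (1 + A) * (1 - A)⁻¹

theorem cayley_mem_SO {A : Matrix (Fin n) (Fin n) ℝ} (hA : Aᵀ = -A) : cayley A ∈ SO n := by
  have hunit := isUnit_det_one_sub_of_skew hA
  have hT : (1 - A)ᵀ = 1 + A := by rw [transpose_sub, transpose_one, hA, sub_neg_eq_add]
  have hdet : (1 + A).det = (1 - A).det := by rw [← hT, det_transpose]
  have hcomm : (1 + A) * (1 - A) = (1 - A) * (1 + A) := by noncomm_ring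
  constructor
  · rw [mul_eq_one_comm, cayley, transpose_mul, transpose_nonsing_inv, hT, ← hT,
      transpose_transpose, hT, Matrix.mul_assoc, ← Matrix.mul_assoc (1 - A), ← hcomm,
      Matrix.mul_assoc (1 + A), mul_nonsing_inv _ hunit, Matrix.mul_one,
      nonsing_inv_mul _ (hdet ▸ hunit)]
  · rw [cayley, det_mul, hdet, ← det_mul, mul_nonsing_inv _ hunit, det_one]

theorem cayley_eq_two_smul_inv_sub_one (h : IsUnit (1 - A).det) :
    cayley A = (2 : ℝ) • (1 - A)⁻¹ - 1 := by
  rw [cayley, show 1 + A = (2 : ℝ) • 1 - (1 - A) by rw [two_smul]; abel, Matrix.sub_mul,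
    mul_nonsing_inv _ h, smul_mul, Matrix.one_mul]

theorem inv_one_sub_smul_sub_inv_one_sub_smul {s t : ℝ} (hs : IsUnit (1 - s • A).det)
    (ht : IsUnit (1 - t • A).det) :
    (1 - s • A)⁻¹ - (1 - t • A)⁻¹ = (s - t) • ((1 - s • A)⁻¹ * A * (1 - t • A)⁻¹) := by
  calc (1 - s • A)⁻¹ - (1 - t • A)⁻¹
      = (1 - s • A)⁻¹ * ((1 - t • A) - (1 - s • A)) * (1 - t • A)⁻¹ := by
        rw [Matrix.mul_sub, nonsing_inv_mul _ hs, Matrix.sub_mul,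
          mul_nonsing_inv_cancel_right _ _ ht, Matrix.one_mul]
    _ = _ := by
        rw [show 1 - t • A - (1 - s • A) = (s - t) • A by rw [sub_smul]; abel, Matrix.mul_smul,
          smul_mul]

theorem lipschitzWith_cayley_smul (hA : Aᵀ = -A) :
    LipschitzWith (2 * ‖A‖₊) fun t : ℝ => cayley (t • A) := by
  refine LipschitzWith.of_dist_le_mul fun s t => ?_
  have skew (r : ℝ) : (r • A)ᵀ = -(r • A) := by rw [transpose_smul, hA, smul_neg]
  have unit (r : ℝ) := isUnit_det_one_sub_of_skew (skew r)
  have hle : ‖(1 - s • A)⁻¹ * A * (1 - t • A)⁻¹‖ ≤ ‖A‖ :=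
    (norm_mul_inv_one_sub_le_of_skew (skew t) _).trans (norm_inv_one_sub_mul_le_of_skew (skew s) A)
  rw [dist_eq_norm, cayley_eq_two_smul_inv_sub_one (unit s),
    cayley_eq_two_smul_inv_sub_one (unit t), sub_sub_sub_cancel_right, ← smul_sub,
    inv_one_sub_smul_sub_inv_one_sub_smul (unit s) (unit t),
    norm_smul, norm_smul, Real.norm_two, ← dist_eq_norm, mul_comm (dist s t), ← mul_assoc]
  push_cast
  gcongr

theorem DSO_one_cayley_le {A : Matrix (Fin n) (Fin n) ℝ} (hA : Aᵀ = -A) :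
    DSO n 1 (cayley A) ≤ ENNReal.ofReal (2 * ‖A‖) := by
  have skew (r : ℝ) : (r • A)ᵀ = -(r • A) := by rw [transpose_smul, hA, smul_neg]
  calc DSO n 1 (cayley A)
      = intrinsicDistE edist (SO n) (cayley ((0 : ℝ) • A)) (cayley ((1 : ℝ) • A)) := by
        simp [DSO_eq_intrinsicDistE, cayley]
    _ ≤ (2 * ‖A‖₊ : NNReal) := intrinsicDistE_le_of_lipschitzOnWith
        (γ := fun t : ℝ => cayley (t • A)) (lipschitzWith_cayley_smul hA).lipschitzOnWith
        fun t _ => cayley_mem_SO (skew t)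
    _ = ENNReal.ofReal (2 * ‖A‖) := by
        simp [ENNReal.ofReal_mul, ofReal_norm, enorm_eq_nnnorm]

theorem isUnit_det_one_add_of_norm_sub_one_lt (hg : ‖g - 1‖ < 2) : IsUnit (g + 1).det := by
  refine isUnit_det_of_forall_mul_eq_zero fun x hx => ?_
  have h2 : (2 : ℝ) • x = -((g - 1) * x) := by
    rw [eq_neg_iff_add_eq_zero, ← hx, two_smul]
    noncomm_ring
  have hle : 2 * ‖x‖ ≤ ‖g - 1‖ * ‖x‖ := by
    calc 2 * ‖x‖ = ‖(2 : ℝ) • x‖ := by rw [norm_smul, Real.norm_two]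
      _ ≤ ‖g - 1‖ * ‖x‖ := by rw [h2, norm_neg]; exact norm_mul_le _ _
  exact norm_le_zero_iff.mp (by nlinarith [norm_nonneg x])

-- Inverting the Cayley transform: `A = (g - 1) (g + 1)⁻¹ = 1 - 2 (g + 1)⁻¹`.
theorem exists_skew_cayley_eq (hg : g ∈ SO n) (hunit : IsUnit (g + 1).det) :
    ∃ A : Matrix (Fin n) (Fin n) ℝ, Aᵀ = -A ∧ cayley A = g ∧ A * (g + 1) = g - 1 := by
  have hT : (g + 1)⁻¹ᵀ = (g + 1)⁻¹ * g := by
    rw [transpose_nonsing_inv, transpose_add, transpose_one]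
    refine inv_eq_left_inv ?_
    rw [Matrix.mul_assoc, Matrix.mul_add, hg.1, Matrix.mul_one, add_comm 1 g,
      nonsing_inv_mul _ hunit]
  have hsub : 1 - (1 - (2 : ℝ) • (g + 1)⁻¹) = (2 : ℝ) • (g + 1)⁻¹ := sub_sub_cancel _ _
  have hinv : ((2 : ℝ) • (g + 1)⁻¹) * ((2 : ℝ)⁻¹ • (g + 1)) = 1 := by
    rw [smul_mul, Matrix.mul_smul, smul_smul, mul_inv_cancel₀ two_ne_zero, one_smul,
      nonsing_inv_mul _ hunit]
  refine ⟨1 - (2 : ℝ) • (g + 1)⁻¹, ?_, ?_, ?_⟩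
  · have h : (g + 1)⁻¹ * g = 1 - (g + 1)⁻¹ := by
      rw [eq_sub_iff_add_eq]
      simpa [Matrix.mul_add] using nonsing_inv_mul _ hunit
    rw [transpose_sub, transpose_smul, hT, h, transpose_one, smul_sub, two_smul, two_smul]
    abel
  · rw [cayley_eq_two_smul_inv_sub_one (by rw [hsub]; exact isUnit_det_of_right_inverse hinv),
      hsub, inv_eq_right_inv hinv, smul_smul, mul_inv_cancel₀ two_ne_zero, one_smul,
      add_sub_cancel_right]
  · rw [Matrix.sub_mul, smul_mul, nonsing_inv_mul _ hunit, two_smul, Matrix.one_mul]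
    abel

theorem DSO_one_le (hg : g ∈ SO n) (h2 : ‖g - 1‖ < 2) :
    DSO n 1 g ≤ ENNReal.ofReal (‖g - 1‖ / (1 - ‖g - 1‖ / 2)) := by
  obtain ⟨A, hskew, hA, hAg⟩ :=
    exists_skew_cayley_eq hg (isUnit_det_one_add_of_norm_sub_one_lt h2)
  have hnorm : 2 * ‖A‖ ≤ ‖g - 1‖ + ‖A‖ * ‖g - 1‖ := by
    have h : (2 : ℝ) • A = (g - 1) - A * (g - 1) := by
      rw [← hAg, two_smul, hAg]
      rw [show A * (g - 1) = A * (g + 1) - A - A by noncomm_ring, hAg]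
      abel
    calc 2 * ‖A‖ = ‖(2 : ℝ) • A‖ := by rw [norm_smul, Real.norm_two]
      _ ≤ ‖g - 1‖ + ‖A * (g - 1)‖ := h ▸ norm_sub_le _ _
      _ ≤ ‖g - 1‖ + ‖A‖ * ‖g - 1‖ := by gcongr; exact norm_mul_le _ _
  calc DSO n 1 g ≤ ENNReal.ofReal (2 * ‖A‖) := hA ▸ DSO_one_cayley_le hskew
    _ ≤ _ := by
      refine ENNReal.ofReal_le_ofReal ?_
      rw [le_div_iff₀ (by linarith)]
      nlinarith

theorem DSO_le_of_norm_sub_lt (hx : x ∈ SO n) (hy : y ∈ SO n) (h2 : ‖y - x‖ < 2) :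
    DSO n x y ≤ ENNReal.ofReal (‖y - x‖ / (1 - ‖y - x‖ / 2)) := by
  have hnorm : ‖y * xᵀ - 1‖ = ‖y - x‖ := by
    rw [← hx.1, ← Matrix.sub_mul, norm_mul_right_of_mem_SO (transpose_mem_SO hx)]
  have h := DSO_one_le (mul_mem_SO hy (transpose_mem_SO hx)) (hnorm ▸ h2)
  rwa [← DSO_mul_right hx, Matrix.one_mul, mul_transpose_mul_cancel_of_mem_SO hx, hnorm] at h

theorem DSO_self (hx : x ∈ SO n) : DSO n x x = 0 := by
  simpa using DSO_le_of_norm_sub_lt hx hx (by simp)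

theorem tendsto_DSO_nhdsWithin_self (hx : x ∈ SO n) :
    Tendsto (DSO n x) (𝓝[SO n] x) (𝓝 0) := by
  have hbound : ContinuousAt (fun y => ENNReal.ofReal (‖y - x‖ / (1 - ‖y - x‖ / 2))) x :=
    ENNReal.continuous_ofReal.continuousAt.comp
      (ContinuousAt.div (by fun_prop) (by fun_prop) (by simp))
  refine tendsto_of_tendsto_of_tendsto_of_le_of_le' tendsto_const_nhds
    (by simpa using hbound.tendsto.mono_left nhdsWithin_le_nhds) (by simp) ?_
  filter_upwards [self_mem_nhdsWithin, nhdsWithin_le_nhds (Metric.ball_mem_nhds x two_pos)]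
    with y hy hyx
  exact DSO_le_of_norm_sub_lt hx hy (by rwa [← dist_eq_norm])

theorem continuousOn_DSO : ContinuousOn (fun z => DSO n z.1 z.2) (SO n ×ˢ SO n) := by
  rintro ⟨x, y⟩ ⟨hx, hy⟩
  have hself : Tendsto (fun z => DSO n x z.1 + DSO n y z.2) (𝓝[SO n ×ˢ SO n] (x, y)) (𝓝 0) := by
    rw [nhdsWithin_prod_eq]
    simpa using ((tendsto_DSO_nhdsWithin_self hx).comp tendsto_fst).add
      ((tendsto_DSO_nhdsWithin_self hy).comp tendsto_snd)
  have hlow := ENNReal.Tendsto.sub (tendsto_const_nhds (x := DSO n x y)) hself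
    (Or.inr ENNReal.zero_ne_top)
  have hup := (tendsto_const_nhds (x := DSO n x y)).add hself
  rw [tsub_zero] at hlow
  rw [add_zero] at hup
  refine tendsto_of_tendsto_of_tendsto_of_le_of_le' hlow hup ?_ ?_
  all_goals filter_upwards [self_mem_nhdsWithin] with z hz
  · rw [tsub_le_iff_right]
    calc DSO n x y ≤ DSO n x z.1 + (DSO n z.1 z.2 + DSO n z.2 y) :=
          (DSO_triangle x z.1 y).trans (add_le_add_right (DSO_triangle _ _ _) _)
      _ = _ := by rw [DSO_comm hz.2 hy]; ring
  · calc DSO n z.1 z.2 ≤ DSO n z.1 x + (DSO n x y + DSO n y z.2) :=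
          (DSO_triangle z.1 x z.2).trans (add_le_add_right (DSO_triangle _ _ _) _)
      _ = _ := by rw [DSO_comm hz.1 hx]; ring

end Cayley

section PlaneRotations

open scoped Matrix.Norms.Frobenius

variable {n : ℕ} {i j : Fin n} {g : Matrix (Fin n) (Fin n) ℝ}

theorem kacRot_mul_apply (hij : i ≠ j) (θ : ℝ) (x : Matrix (Fin n) (Fin n) ℝ) (k l : Fin n) :
    (kacRot i j θ * x) k l = x k l +
      (if k = i then (Real.cos θ - 1) * x i l - Real.sin θ * x j l else 0) +
      (if k = j then Real.sin θ * x i l + (Real.cos θ - 1) * x j l else 0) := by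
  have h (m : Fin n) : kacRot i j θ k m * x m l = (if m = k then x k l else 0) +
      (if m = i then (if k = i then (Real.cos θ - 1) * x i l
        else if k = j then Real.sin θ * x i l else 0) else 0) +
      (if m = j then (if k = i then -Real.sin θ * x j l
        else if k = j then (Real.cos θ - 1) * x j l else 0) else 0) := by
    simp only [kacRot, of_apply]
    grind
  simp only [mul_apply, h, Finset.sum_add_distrib, Finset.sum_ite_eq', Finset.mem_univ, if_true]
  grind

theorem kacRot_zero (i j : Fin n) : kacRot i j 0 = 1 := by
  ext k l
  simp only [kacRot, of_apply, one_apply, Real.cos_zero, Real.sin_zero, neg_zero]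
  grind

theorem kacRot_add (hij : i ≠ j) (s t : ℝ) :
    kacRot i j (s + t) = kacRot i j s * kacRot i j t := by
  ext k l
  rw [← Matrix.mul_one (kacRot i j (s + t)), ← Matrix.mul_one (kacRot i j t)]
  simp only [kacRot_mul_apply hij, Real.cos_add, Real.sin_add]
  split_ifs <;> simp_all <;> ring

theorem kacRot_transpose (i j : Fin n) (θ : ℝ) : (kacRot i j θ)ᵀ = kacRot i j (-θ) := by
  ext k l
  simp only [kacRot, of_apply, transpose_apply, Real.cos_neg, Real.sin_neg]
  grind

-- The determinant of `R(θ) = R(θ/2)²` is a square, hence `1` rather than `-1`.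
theorem kacRot_mem_SO (hij : i ≠ j) (θ : ℝ) : kacRot i j θ ∈ SO n := by
  have horth (t : ℝ) : kacRot i j t * (kacRot i j t)ᵀ = 1 := by
    rw [kacRot_transpose, ← kacRot_add hij, add_neg_cancel, kacRot_zero]
  refine ⟨horth θ, ?_⟩
  have hdet := congrArg det (horth (θ / 2))
  rwa [det_mul, det_transpose, ← det_mul, ← kacRot_add hij, add_halves, det_one] at hdet

theorem kacRot_add_two_pi (i j : Fin n) (θ : ℝ) : kacRot i j (θ + 2 * Real.pi) = kacRot i j θ := by
  simp only [kacRot, Real.cos_add_two_pi, Real.sin_add_two_pi]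

theorem continuous_kacRot (i j : Fin n) : Continuous (kacRot i j) := by
  refine continuous_matrix fun k l => ?_
  simp only [kacRot, of_apply]
  split_ifs <;> fun_prop

theorem DSO_kacRot_mul (hij : i ≠ j) (θ : ℝ) (x y : Matrix (Fin n) (Fin n) ℝ) :
    DSO n (kacRot i j θ * x) (kacRot i j θ * y) = DSO n x y :=
  DSO_mul_left (kacRot_mem_SO hij θ) x y

theorem trace_kacRot_mul (hij : i ≠ j) (θ : ℝ) (x : Matrix (Fin n) (Fin n) ℝ) :
    trace (kacRot i j θ * x) =
      trace x + (Real.cos θ - 1) * (x i i + x j j) + Real.sin θ * (x i j - x j i) := by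
  simp only [trace, diag, kacRot_mul_apply hij, Finset.sum_add_distrib, Finset.sum_ite_eq',
    Finset.mem_univ, if_true]
  ring

theorem exists_cos_mul_add_sin_mul_eq_sqrt (a b : ℝ) :
    ∃ θ, Real.cos θ * a + Real.sin θ * b = √(a ^ 2 + b ^ 2) := by
  refine ⟨Complex.arg ⟨a, b⟩, ?_⟩
  have hcos := Complex.norm_mul_cos_arg ⟨a, b⟩
  have hsin := Complex.norm_mul_sin_arg ⟨a, b⟩
  rw [← Complex.norm_eq_sqrt_sq_add_sq ⟨a, b⟩]
  linear_combination ‖(⟨a, b⟩ : ℂ)‖ * Real.cos_sq_add_sin_sq (Complex.arg ⟨a, b⟩) -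
    Real.cos (Complex.arg ⟨a, b⟩) * hcos - Real.sin (Complex.arg ⟨a, b⟩) * hsin

theorem exists_trace_kacRot_mul_eq (hij : i ≠ j) (x : Matrix (Fin n) (Fin n) ℝ) :
    ∃ θ, trace (kacRot i j θ * x) =
      trace x - (x i i + x j j) + √((x i i + x j j) ^ 2 + (x i j - x j i) ^ 2) := by
  obtain ⟨θ, hθ⟩ := exists_cos_mul_add_sin_mul_eq_sqrt (x i i + x j j) (x i j - x j i)
  exact ⟨θ, by rw [trace_kacRot_mul hij, ← hθ]; ring⟩

theorem sq_norm_sub_one_of_mem_SO (hg : g ∈ SO n) : ‖g - 1‖ ^ 2 = 2 * n - 2 * trace g := by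
  rw [sq_frobenius_norm_eq_trace, transpose_sub, transpose_one, Matrix.sub_mul, Matrix.mul_sub,
    transpose_mul_self_of_mem_SO hg]
  simp only [Matrix.mul_one, Matrix.one_mul, trace_sub, trace_transpose, trace_one,
    Fintype.card_fin]
  ring

theorem norm_kacRot_sub_one_le (hij : i ≠ j) (θ : ℝ) : ‖kacRot i j θ - 1‖ ≤ 2 * |θ| := by
  refine le_of_sq_le_sq ?_ (by positivity)
  have htrace := trace_kacRot_mul hij θ 1
  simp only [Matrix.mul_one, trace_one, Fintype.card_fin, one_apply_eq, one_apply_ne hij,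
    one_apply_ne hij.symm] at htrace
  rw [sq_norm_sub_one_of_mem_SO (kacRot_mem_SO hij θ), htrace, mul_pow, sq_abs]
  nlinarith [Real.one_sub_sq_div_two_le_cos (x := θ), sq_nonneg θ]

theorem DSO_one_kacRot_ne_top (hij : i ≠ j) (θ : ℝ) : DSO n 1 (kacRot i j θ) ≠ ⊤ := by
  have hlip : LipschitzWith (2 * ‖θ‖₊) fun t : ℝ => kacRot i j (t * θ) :=
    LipschitzWith.of_dist_le_mul fun s t => by
      calc dist (kacRot i j (s * θ)) (kacRot i j (t * θ))
          = ‖(kacRot i j ((s - t) * θ) - 1) * kacRot i j (t * θ)‖ := by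
            rw [dist_eq_norm, Matrix.sub_mul, ← kacRot_add hij, Matrix.one_mul]
            ring_nf
        _ ≤ 2 * |(s - t) * θ| := by
            rw [norm_mul_right_of_mem_SO (kacRot_mem_SO hij _)]
            exact norm_kacRot_sub_one_le hij _
        _ = _ := by
            rw [abs_mul, Real.dist_eq]
            push_cast
            rw [Real.norm_eq_abs]
            ring
  have hle : intrinsicDistE edist (SO n) (kacRot i j (0 * θ)) (kacRot i j (1 * θ)) ≤ _ :=
    intrinsicDistE_le_of_lipschitzOnWith (γ := fun t : ℝ => kacRot i j (t * θ))
      hlip.lipschitzOnWith fun t _ => kacRot_mem_SO hij (t * θ)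
  rw [zero_mul, one_mul, kacRot_zero, ← DSO_eq_intrinsicDistE] at hle
  exact ne_top_of_le_ne_top ENNReal.coe_ne_top hle

end PlaneRotations

section Finiteness

open scoped Matrix.Norms.Frobenius

variable {n : ℕ} {i j : Fin n} {g x y : Matrix (Fin n) (Fin n) ℝ}

theorem symm_and_nonneg_of_trace_kacRot_mul_le (hij : i ≠ j)
    (hmax : ∀ θ, trace (kacRot i j θ * x) ≤ trace x) : x i j = x j i ∧ 0 ≤ x i i + x j j := by
  obtain ⟨θ, hθ⟩ := exists_trace_kacRot_mul_eq hij x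
  have hle : √((x i i + x j j) ^ 2 + (x i j - x j i) ^ 2) ≤ x i i + x j j := by linarith [hmax θ]
  have hnonneg := (Real.sqrt_nonneg _).trans hle
  refine ⟨?_, hnonneg⟩
  nlinarith [(Real.sqrt_le_left hnonneg).mp hle]

theorem apply_eq_zero_of_isSymm_mul_diagonal {d : Fin n → ℝ} (hd : Function.Injective d)
    (hpos : ∀ i, 0 < d i) (hg : g ∈ SO n) (hsymm : (g * diagonal d).IsSymm) (hij : i ≠ j) :
    g i j = 0 := by
  have hT : diagonal d * gᵀ = g * diagonal d := by
    simpa [IsSymm, transpose_mul] using hsymm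
  have hcomm : g * (diagonal d * diagonal d) = diagonal d * diagonal d * g := by
    calc g * (diagonal d * diagonal d) = diagonal d * gᵀ * diagonal d := by
          rw [hT, Matrix.mul_assoc]
      _ = diagonal d * gᵀ * (diagonal d * gᵀ) * g := by
          rw [Matrix.mul_assoc _ (diagonal d * gᵀ), Matrix.mul_assoc (diagonal d) gᵀ g,
            transpose_mul_self_of_mem_SO hg, Matrix.mul_one]
      _ = diagonal d * diagonal d * g := by
          rw [Matrix.mul_assoc (diagonal d) gᵀ, hT, ← Matrix.mul_assoc gᵀ,
            transpose_mul_self_of_mem_SO hg, Matrix.one_mul]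
  have hentry := congrFun (congrFun hcomm i) j
  rw [diagonal_mul_diagonal, mul_diagonal, diagonal_mul] at hentry
  have hne : d j * d j - d i * d i ≠ 0 :=
    sub_ne_zero.mpr fun h => hij (hd ((mul_self_inj (hpos j).le (hpos i).le).mp h).symm)
  exact (mul_eq_zero.mp (by linarith : g i j * (d j * d j - d i * d i) = 0)).resolve_right hne

theorem eq_one_of_isSymm_mul_diagonal {d : Fin n → ℝ} (hd : Function.Injective d)
    (hpos : ∀ i, 0 < d i) (hg : g ∈ SO n) (hsymm : (g * diagonal d).IsSymm)
    (hnonneg : ∀ i j, i ≠ j → 0 ≤ g i i * d i + g j j * d j) : g = 1 := by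
  have hdiag : g = diagonal fun i => g i i := by
    ext i j
    rcases eq_or_ne i j with rfl | hij
    · simp
    · simp [hij, apply_eq_zero_of_isSymm_mul_diagonal hd hpos hg hsymm hij]
  have hsq (i : Fin n) : g i i = 1 ∨ g i i = -1 := by
    have h := congrFun (congrFun hg.1 i) i
    rw [hdiag] at h
    simpa [mul_self_eq_one_iff] using h
  have hone (i : Fin n) : g i i = 1 := by
    refine (hsq i).resolve_right fun hi => ?_
    have hother : ∀ j ∈ Finset.univ.erase i, g j j = 1 := fun j hj =>
      (hsq j).resolve_right fun hj' => by
        have := hnonneg i j (Finset.ne_of_mem_erase hj).symm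
        rw [hi, hj'] at this
        linarith [hpos i, hpos j]
    have hdet : g.det = -1 := by
      rw [hdiag, det_diagonal, ← Finset.mul_prod_erase _ _ (Finset.mem_univ i),
        Finset.prod_eq_one hother, hi, mul_one]
    linarith [hg.2]
  rw [hdiag]
  simp [hone]

theorem isCompact_setOf_DSO_ne_top (g : Matrix (Fin n) (Fin n) ℝ) :
    IsCompact {x ∈ SO n | DSO n g x ≠ ⊤} := by
  refine isCompact_SO.of_isClosed_subset (isClosed_of_closure_subset fun x hx => ?_)
    fun x hx => hx.1
  have hxS : x ∈ SO n := isCompact_SO.isClosed.closure_subset_iff.mpr (fun y hy => hy.1) hx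
  refine ⟨hxS, ?_⟩
  have hnear : ∀ᶠ y in 𝓝 x, y ∈ SO n → DSO n x y < 1 :=
    eventually_nhdsWithin_iff.mp
      ((tendsto_DSO_nhdsWithin_self hxS).eventually_lt_const zero_lt_one)
  obtain ⟨y, ⟨hyS, hgy⟩, hxy⟩ := (mem_closure_iff_frequently.mp hx).and_eventually hnear |>.exists
  refine ne_top_of_le_ne_top (ENNReal.add_ne_top.mpr ⟨hgy, ?_⟩) (DSO_triangle g y x)
  exact DSO_comm hxS hyS ▸ (hxy hyS).ne_top

-- Among the matrices at finite distance from `g`, one maximises `m ↦ tr (m W)`, where `W` is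
-- a diagonal matrix with distinct positive entries.  Perturbing it by plane rotations shows that it
-- is the identity matrix.
theorem DSO_one_ne_top (hg : g ∈ SO n) : DSO n g 1 ≠ ⊤ := by
  let d : Fin n → ℝ := fun i => i + 1
  obtain ⟨m, ⟨hm, hgm⟩, hmax⟩ := (isCompact_setOf_DSO_ne_top g).exists_isMaxOn
    ⟨g, hg, by simp [DSO_self hg]⟩ (f := fun m => trace (m * diagonal d))
    (by fun_prop)
  have hrot {i j : Fin n} (hij : i ≠ j) (θ : ℝ) :
      trace (kacRot i j θ * (m * diagonal d)) ≤ trace (m * diagonal d) := by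
    have hmem : kacRot i j θ * m ∈ {x ∈ SO n | DSO n g x ≠ ⊤} := by
      refine ⟨mul_mem_SO (kacRot_mem_SO hij θ) hm, ?_⟩
      refine ne_top_of_le_ne_top (ENNReal.add_ne_top.mpr ⟨hgm, ?_⟩) (DSO_triangle g m _)
      have h := DSO_mul_right hm 1 (kacRot i j θ)
      rw [Matrix.one_mul] at h
      exact h ▸ DSO_one_kacRot_ne_top hij θ
    rw [← Matrix.mul_assoc]
    exact hmax hmem
  have hcrit {i j : Fin n} (hij : i ≠ j) := symm_and_nonneg_of_trace_kacRot_mul_le hij (hrot hij)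
  have hone : m = 1 := by
    refine eq_one_of_isSymm_mul_diagonal (d := d) ?_ (fun i => by positivity) hm ?_
      fun i j hij => ?_
    · intro i j hij
      simpa [d, Fin.ext_iff] using hij
    · ext i j
      rcases eq_or_ne i j with rfl | hij
      · rfl
      · exact (hcrit hij.symm).1
    · simpa using (hcrit hij).2
  exact hone ▸ hgm

theorem DSO_ne_top (hx : x ∈ SO n) (hy : y ∈ SO n) : DSO n x y ≠ ⊤ := by
  refine ne_top_of_le_ne_top (ENNReal.add_ne_top.mpr ⟨DSO_one_ne_top hx, ?_⟩) (DSO_triangle x 1 y)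
  exact DSO_comm hy one_mem_SO ▸ DSO_one_ne_top hy

end Finiteness

section InfinitesimalContraction

open scoped Matrix.Norms.Frobenius

variable {n : ℕ} {i j : Fin n} {g x y : Matrix (Fin n) (Fin n) ℝ}

theorem sum_sum_eq_two_nsmul_sum_pairs_add {M : Type*} [AddCommMonoid M] {F : Fin n → Fin n → M}
    (hF : ∀ i j, F i j = F j i) :
    ∑ i, ∑ j, F i j = 2 • ∑ p ∈ pairs n, F p.1 p.2 + ∑ i, F i i := by
  have hsplit (i j : Fin n) : F i j = (if i < j then F i j else 0) + (if j < i then F j i else 0) +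
      (if i = j then F i i else 0) := by
    rcases lt_trichotomy i j with h | rfl | h
    · simp [h, h.not_gt, h.ne]
    · simp
    · simp [h, h.not_gt, h.ne', hF i j]
  have hpairs : ∑ p ∈ pairs n, F p.1 p.2 = ∑ i, ∑ j, if i < j then F i j else 0 := by
    rw [pairs, Finset.sum_filter, ← Finset.univ_product_univ, Finset.sum_product]
  calc ∑ i, ∑ j, F i j
      = ∑ i, ∑ j, (if i < j then F i j else 0) + ∑ i, ∑ j, (if j < i then F j i else 0) +
          ∑ i, F i i := by
        rw [Finset.sum_congr rfl fun i _ => Finset.sum_congr rfl fun j _ => hsplit i j]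
        simp only [Finset.sum_add_distrib, Finset.sum_ite_eq, Finset.mem_univ, if_true]
    _ = 2 • ∑ p ∈ pairs n, F p.1 p.2 + ∑ i, F i i := by
        rw [Finset.sum_comm (f := fun i j => if j < i then F j i else 0), ← hpairs, two_nsmul]

theorem card_pairs (n : ℕ) : (pairs n).card = n.choose 2 := by
  have h := sum_sum_eq_two_nsmul_sum_pairs_add (F := fun _ _ : Fin n => 1) fun _ _ => rfl
  simp only [Finset.sum_const, Finset.card_univ, Fintype.card_fin, smul_eq_mul, mul_one] at h
  rw [Nat.choose_two_right, Nat.mul_sub, h]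
  lia

theorem ne_of_mem_pairs {p : Fin n × Fin n} (hp : p ∈ pairs n) : p.1 ≠ p.2 :=
  (Finset.mem_filter.mp hp).2.ne

theorem sum_row_sq_of_mem_SO (hg : g ∈ SO n) (i : Fin n) : ∑ j, g i j ^ 2 = 1 := by
  simpa [mul_apply, sq] using congrFun (congrFun hg.1 i) i

theorem sq_add_sq_le_one_of_mem_SO (hg : g ∈ SO n) (hij : i ≠ j) (k : Fin n) :
    g k i ^ 2 + g k j ^ 2 ≤ 1 := by
  rw [← sum_row_sq_of_mem_SO hg k, ← Finset.sum_pair (f := fun m => g k m ^ 2) hij]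
  exact Finset.sum_le_sum_of_subset_of_nonneg (Finset.subset_univ _) fun _ _ _ => sq_nonneg _

theorem exists_sq_norm_kacRot_mul_sub_one_le (hg : g ∈ SO n) (hij : i ≠ j) :
    ∃ θ, ‖kacRot i j θ * g - 1‖ ^ 2 ≤ ‖g - 1‖ ^ 2 - (g i j - g j i) ^ 2 / 2 := by
  obtain ⟨θ, hθ⟩ := exists_trace_kacRot_mul_eq hij g
  refine ⟨θ, ?_⟩
  rw [sq_norm_sub_one_of_mem_SO (mul_mem_SO (kacRot_mem_SO hij θ) hg),
    sq_norm_sub_one_of_mem_SO hg, hθ]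
  set a := g i i + g j j
  set b := g i j - g j i
  set r := √(a ^ 2 + b ^ 2)
  have hr : r ^ 2 = a ^ 2 + b ^ 2 := Real.sq_sqrt (by positivity)
  have har : a ≤ r := Real.le_sqrt_of_sq_le (by linarith [sq_nonneg b])
  have hr2 : r ≤ 2 := by
    refine (Real.sqrt_le_left zero_le_two).mpr ?_
    linarith [sq_add_sq_le_one_of_mem_SO hg hij i, sq_add_sq_le_one_of_mem_SO hg hij j,
      sq_nonneg (g i i - g j j), sq_nonneg (g i j + g j i)]
  -- It remains to see that `b ^ 2 / 2 = (r - a) * (r + a) / 2 ≤ 2 * (r - a)`.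
  nlinarith [mul_nonneg (sub_nonneg.mpr har) (by linarith : 0 ≤ 4 - (r + a))]

theorem sq_norm_sub_transpose_add (hg : g ∈ SO n) :
    ‖g - gᵀ‖ ^ 2 + ‖(g - 1) * (g - 1)ᵀ‖ ^ 2 = 4 * ‖g - 1‖ ^ 2 := by
  have hmul : (g - 1) * (g - 1)ᵀ = (2 : ℝ) • (1 : Matrix (Fin n) (Fin n) ℝ) - g - gᵀ := by
    rw [transpose_sub, transpose_one, Matrix.sub_mul, Matrix.mul_sub, hg.1, two_smul]
    noncomm_ring
  have htrace : trace (gᵀ * gᵀ) = trace (g * g) := by rw [← transpose_mul, trace_transpose]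
  rw [sq_norm_sub_one_of_mem_SO hg, hmul, sq_frobenius_norm_eq_trace, sq_frobenius_norm_eq_trace]
  simp only [transpose_sub, transpose_smul, transpose_one, transpose_transpose, Matrix.sub_mul,
    Matrix.mul_sub, hg.1, transpose_mul_self_of_mem_SO hg, smul_mul, Matrix.mul_smul,
    Matrix.one_mul, Matrix.mul_one, trace_sub, trace_smul, trace_transpose, trace_one, htrace,
    Fintype.card_fin, smul_eq_mul]
  ring

theorem sq_norm_sub_transpose_eq_two_mul_sum_pairs (g : Matrix (Fin n) (Fin n) ℝ) :
    ‖g - gᵀ‖ ^ 2 = 2 * ∑ p ∈ pairs n, (g p.1 p.2 - g p.2 p.1) ^ 2 := by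
  have hsum := sum_sum_eq_two_nsmul_sum_pairs_add
    (F := fun i j => (g i j - g j i) ^ 2) fun i j => by ring
  rw [sq_frobenius_norm_eq_trace, trace]
  simp only [diag, mul_apply, transpose_apply, Matrix.sub_apply, ← sq]
  rw [Finset.sum_comm, hsum]
  simp

theorem le_sum_pairs_sq_sub (hg : g ∈ SO n) :
    2 * ‖g - 1‖ ^ 2 - ‖g - 1‖ ^ 4 / 2 ≤ ∑ p ∈ pairs n, (g p.1 p.2 - g p.2 p.1) ^ 2 := by
  have hnorm : ‖(g - 1) * (g - 1)ᵀ‖ ≤ ‖g - 1‖ ^ 2 := by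
    calc ‖(g - 1) * (g - 1)ᵀ‖ ≤ ‖g - 1‖ * ‖(g - 1)ᵀ‖ := norm_mul_le _ _
      _ = ‖g - 1‖ ^ 2 := by rw [frobenius_norm_transpose, sq]
  have hsq : ‖(g - 1) * (g - 1)ᵀ‖ ^ 2 ≤ ‖g - 1‖ ^ 4 := by
    calc ‖(g - 1) * (g - 1)ᵀ‖ ^ 2 ≤ (‖g - 1‖ ^ 2) ^ 2 := by gcongr
      _ = ‖g - 1‖ ^ 4 := by ring
  linarith [sq_norm_sub_transpose_add hg, sq_norm_sub_transpose_eq_two_mul_sum_pairs g]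

theorem exists_sum_pairs_sq_norm_kacRot_mul_sub_one_le (hg : g ∈ SO n) :
    ∃ s : Fin n × Fin n → ℝ, (∀ p ∈ pairs n, ‖kacRot p.1 p.2 (s p) * g - 1‖ ≤ ‖g - 1‖) ∧
      ∑ p ∈ pairs n, ‖kacRot p.1 p.2 (s p) * g - 1‖ ^ 2 ≤
        ((n.choose 2 : ℝ) - 1 + ‖g - 1‖ ^ 2 / 4) * ‖g - 1‖ ^ 2 := by
  have hrot (p : Fin n × Fin n) : ∃ s, p ∈ pairs n →
      ‖kacRot p.1 p.2 s * g - 1‖ ^ 2 ≤ ‖g - 1‖ ^ 2 - (g p.1 p.2 - g p.2 p.1) ^ 2 / 2 := by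
    by_cases hp : p ∈ pairs n
    · exact (exists_sq_norm_kacRot_mul_sub_one_le hg (ne_of_mem_pairs hp)).imp fun _ hs _ => hs
    · exact ⟨0, fun h => absurd h hp⟩
  choose s hs using hrot
  refine ⟨s, fun p hp => le_of_sq_le_sq ?_ (norm_nonneg _), ?_⟩
  · exact (hs p hp).trans (sub_le_self _ (by positivity))
  · calc ∑ p ∈ pairs n, ‖kacRot p.1 p.2 (s p) * g - 1‖ ^ 2
        ≤ ∑ p ∈ pairs n, (‖g - 1‖ ^ 2 - (g p.1 p.2 - g p.2 p.1) ^ 2 / 2) := Finset.sum_le_sum hs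
      _ = n.choose 2 * ‖g - 1‖ ^ 2 - (∑ p ∈ pairs n, (g p.1 p.2 - g p.2 p.1) ^ 2) / 2 := by
        rw [Finset.sum_sub_distrib, Finset.sum_const, card_pairs, ← Finset.sum_div, nsmul_eq_mul]
      _ ≤ _ := by linarith [le_sum_pairs_sq_sub hg]

theorem exists_sum_pairs_sq_norm_kacRot_mul_sub_le (hx : x ∈ SO n) (hy : y ∈ SO n) :
    ∃ s : Fin n × Fin n → ℝ, (∀ p ∈ pairs n, ‖kacRot p.1 p.2 (s p) * y - x‖ ≤ ‖y - x‖) ∧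
      ∑ p ∈ pairs n, ‖kacRot p.1 p.2 (s p) * y - x‖ ^ 2 ≤
        ((n.choose 2 : ℝ) - 1 + ‖y - x‖ ^ 2 / 4) * ‖y - x‖ ^ 2 := by
  have hnorm (a : Matrix (Fin n) (Fin n) ℝ) : ‖a * (y * xᵀ) - 1‖ = ‖a * y - x‖ := by
    rw [← norm_mul_right_of_mem_SO hx, Matrix.sub_mul, Matrix.mul_assoc a, Matrix.mul_assoc y,
      transpose_mul_self_of_mem_SO hx, Matrix.mul_one, Matrix.one_mul]
  have hnorm_one := hnorm 1
  rw [Matrix.one_mul, Matrix.one_mul] at hnorm_one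
  simpa only [hnorm, hnorm_one] using
    exists_sum_pairs_sq_norm_kacRot_mul_sub_one_le (mul_mem_SO hy (transpose_mem_SO hx))

end InfinitesimalContraction

section RotationShift

open scoped Matrix.Norms.Frobenius

variable {n : ℕ} {h : ℝ} {x y : Matrix (Fin n) (Fin n) ℝ}

/-- The `ℓ²` distance from `x` to `y` over all coordinate planes, when in each plane `y` may first
be turned by an angle of its own.  Up to normalisation, this is the distance between the laws of one
step of Kac's walk from `x` and from `y` when the two walks rotate the same plane by angles with a
fixed difference. -/
def rotationShiftDist (n : ℕ) (x y : Matrix (Fin n) (Fin n) ℝ) : ℝ≥0∞ :=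
  ⨅ s : Fin n × Fin n → ℝ,
    (∑ p ∈ pairs n, DSO n x (kacRot p.1 p.2 (s p) * y) ^ (2 : ℝ)) ^ (1 / (2 : ℝ))

theorem rotationShiftDist_self (hx : x ∈ SO n) : rotationShiftDist n x x = 0 := by
  refine le_antisymm (iInf_le_of_le 0 ?_) zero_le
  rw [Finset.sum_eq_zero fun p _ => ?_]
  · simp
  · simp [kacRot_zero, DSO_self hx]

theorem rotationShiftDist_triangle (x y z : Matrix (Fin n) (Fin n) ℝ) :
    rotationShiftDist n x z ≤ rotationShiftDist n x y + rotationShiftDist n y z := by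
  simp_rw [rotationShiftDist, ENNReal.iInf_add, ENNReal.add_iInf]
  refine le_iInf₂ fun s t => iInf_le_of_le (s + t) ?_
  refine le_trans ?_ (ENNReal.Lp_add_le _ _ _ one_le_two)
  gcongr with p hp
  have hne := ne_of_mem_pairs hp
  calc DSO n x (kacRot p.1 p.2 ((s + t) p) * z)
      ≤ DSO n x (kacRot p.1 p.2 (s p) * y) +
          DSO n (kacRot p.1 p.2 (s p) * y) (kacRot p.1 p.2 (s p) * (kacRot p.1 p.2 (t p) * z)) := by
        rw [Pi.add_apply, kacRot_add hne, Matrix.mul_assoc]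
        exact DSO_triangle _ _ _
    _ = _ := by rw [DSO_kacRot_mul hne]

/-- The Lipschitz constant, at scale `h`, of `rotationShiftDist` with respect to the Frobenius norm:
the denominator is the price of comparing `DSO` to the norm. -/
def stepFactor (n : ℕ) (h : ℝ) : ℝ := √((n.choose 2 : ℝ) - 1 + h ^ 2 / 4) / (1 - h / 2)

theorem tendsto_stepFactor (n : ℕ) :
    Tendsto (stepFactor n) (𝓝[>] 0) (𝓝 √((n.choose 2 : ℝ) - 1)) := by
  have hcont : ContinuousAt (stepFactor n) 0 := by
    unfold stepFactor
    fun_prop (disch := norm_num)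
  simpa [stepFactor] using hcont.tendsto.mono_left nhdsWithin_le_nhds

theorem one_le_choose_two (hn : 2 ≤ n) : (1 : ℝ) ≤ n.choose 2 := by
  exact_mod_cast Nat.choose_pos hn

theorem rotationShiftDist_le_of_norm_sub_le (hn : 2 ≤ n) (h1 : h ≤ 1) (hx : x ∈ SO n)
    (hy : y ∈ SO n) (hxy : ‖y - x‖ ≤ h) :
    rotationShiftDist n x y ≤ ENNReal.ofReal (stepFactor n h * ‖y - x‖) := by
  obtain ⟨s, hs, hsum⟩ := exists_sum_pairs_sq_norm_kacRot_mul_sub_le hx hy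
  refine iInf_le_of_le s ?_
  have hN := one_le_choose_two hn
  have hstep : 0 ≤ stepFactor n h := div_nonneg (Real.sqrt_nonneg _) (by linarith)
  have hDSO (p : Fin n × Fin n) (hp : p ∈ pairs n) : DSO n x (kacRot p.1 p.2 (s p) * y) ^ (2 : ℝ) ≤
      ENNReal.ofReal (‖kacRot p.1 p.2 (s p) * y - x‖ ^ 2 / (1 - h / 2) ^ 2) := by
    have hsp := hs p hp
    rw [← div_pow, ENNReal.ofReal_pow (div_nonneg (norm_nonneg _) (by linarith)), ENNReal.rpow_two]
    gcongr
    refine (DSO_le_of_norm_sub_lt hx (mul_mem_SO (kacRot_mem_SO (ne_of_mem_pairs hp) _) hy)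
      (by linarith)).trans (ENNReal.ofReal_le_ofReal ?_)
    gcongr <;> linarith
  rw [one_div, ENNReal.rpow_inv_le_iff two_pos]
  calc ∑ p ∈ pairs n, DSO n x (kacRot p.1 p.2 (s p) * y) ^ (2 : ℝ)
      ≤ ∑ p ∈ pairs n, ENNReal.ofReal (‖kacRot p.1 p.2 (s p) * y - x‖ ^ 2 / (1 - h / 2) ^ 2) :=
        Finset.sum_le_sum hDSO
    _ = ENNReal.ofReal ((∑ p ∈ pairs n, ‖kacRot p.1 p.2 (s p) * y - x‖ ^ 2) / (1 - h / 2) ^ 2) := by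
        rw [← ENNReal.ofReal_sum_of_nonneg fun _ _ => by positivity, ← Finset.sum_div]
    _ ≤ ENNReal.ofReal ((n.choose 2 - 1 + h ^ 2 / 4) * ‖y - x‖ ^ 2 / (1 - h / 2) ^ 2) := by
        gcongr
        exact hsum.trans (by gcongr)
    _ = ENNReal.ofReal (stepFactor n h * ‖y - x‖) ^ (2 : ℝ) := by
        rw [ENNReal.rpow_two, ← ENNReal.ofReal_pow (by positivity), stepFactor, mul_pow, div_pow,
          Real.sq_sqrt (by linarith [sq_nonneg h]), div_mul_eq_mul_div]

theorem rotationShiftDist_le_stepFactor_mul_DSO (hn : 2 ≤ n) (h0 : 0 < h) (h1 : h ≤ 1) :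
    rotationShiftDist n x y ≤ ENNReal.ofReal (stepFactor n h) * DSO n x y := by
  have hpos : 0 < stepFactor n h :=
    div_pos (Real.sqrt_pos.mpr (by linarith [one_le_choose_two hn, sq_pos_of_pos h0]))
      (by linarith)
  rw [DSO_eq_intrinsicDistE]
  refine le_mul_intrinsicDistE_of_local (h := ENNReal.ofReal h) (by simpa using hpos)
    ENNReal.ofReal_ne_top (by simpa using h0) (fun x hx => rotationShiftDist_self hx)
    (fun x _ y _ z _ => rotationShiftDist_triangle x y z) (fun x hx y hy hxy => ?_) x y
  rw [edist_comm, edist_dist, dist_eq_norm] at hxy ⊢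
  rw [← ENNReal.ofReal_mul hpos.le]
  exact rotationShiftDist_le_of_norm_sub_le hn h1 hx hy
    ((ENNReal.ofReal_lt_ofReal_iff h0).mp hxy).le

theorem rotationShiftDist_le_sqrt_mul_DSO (hn : 2 ≤ n) (hx : x ∈ SO n) (hy : y ∈ SO n) :
    rotationShiftDist n x y ≤ ENNReal.ofReal √((n.choose 2 : ℝ) - 1) * DSO n x y := by
  refine ge_of_tendsto (ENNReal.Tendsto.mul_const
    ((ENNReal.continuous_ofReal.tendsto _).comp (tendsto_stepFactor n))
    (Or.inr (DSO_ne_top hx hy))) ?_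
  filter_upwards [Ioc_mem_nhdsGT (zero_lt_one' ℝ)] with h hh
  exact rotationShiftDist_le_stepFactor_mul_DSO hn hh.1 hh.2

theorem exists_sum_pairs_DSO_kacRot_mul_lt (hn : 2 ≤ n) (hx : x ∈ SO n) (hy : y ∈ SO n)
    {ε : ℝ≥0∞} (hε : ε ≠ 0) :
    ∃ s : Fin n × Fin n → ℝ, ∑ p ∈ pairs n, DSO n x (kacRot p.1 p.2 (s p) * y) ^ (2 : ℝ) <
      ((n.choose 2 : ℝ≥0∞) - 1) * DSO n x y ^ (2 : ℝ) + ε := by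
  have hsq : rotationShiftDist n x y ^ (2 : ℝ) ≤
      ((n.choose 2 : ℝ≥0∞) - 1) * DSO n x y ^ (2 : ℝ) := by
    calc rotationShiftDist n x y ^ (2 : ℝ)
        ≤ (ENNReal.ofReal √((n.choose 2 : ℝ) - 1) * DSO n x y) ^ (2 : ℝ) := by
          gcongr
          exact rotationShiftDist_le_sqrt_mul_DSO hn hx hy
      _ = _ := by
          rw [ENNReal.mul_rpow_of_nonneg _ _ zero_le_two, ENNReal.rpow_two (ENNReal.ofReal _),
            ← ENNReal.ofReal_pow (Real.sqrt_nonneg _),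
            Real.sq_sqrt (by linarith [one_le_choose_two hn]), ENNReal.ofReal_sub _ zero_le_one,
            ENNReal.ofReal_natCast, ENNReal.ofReal_one]
  have hfin : ((n.choose 2 : ℝ≥0∞) - 1) * DSO n x y ^ (2 : ℝ) ≠ ⊤ :=
    ENNReal.mul_ne_top (by simp) (by simp [DSO_ne_top hx hy])
  have hlt := (ENNReal.lt_rpow_inv_iff two_pos).mpr (hsq.trans_lt (ENNReal.lt_add_right hfin hε))
  obtain ⟨s, hs⟩ := iInf_lt_iff.mp hlt
  rw [one_div] at hs
  exact ⟨s, (ENNReal.rpow_lt_rpow_iff (by norm_num)).mp hs⟩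

end RotationShift

section MeasurableSelection

variable {X Y : Type*} [TopologicalSpace X] [SecondCountableTopology X] [MeasurableSpace X]
  [OpensMeasurableSpace X] [MeasurableSpace Y] [Nonempty Y]

theorem exists_measurable_of_forall_eventually {S : Set X} {P : X → Y → Prop}
    (hP : ∀ x ∈ S, ∃ y, ∀ᶠ x' in 𝓝[S] x, P x' y) : ∃ f, Measurable f ∧ ∀ x ∈ S, P x (f x) := by
  classical
  rcases S.eq_empty_or_nonempty with rfl | ⟨x₀, hx₀⟩
  · exact ⟨fun _ => Classical.arbitrary Y, measurable_const, fun x hx => hx.elim⟩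
  choose! y hy using hP
  choose! V hVopen hxV hVP using fun x hx => mem_nhdsWithin.mp (hy x hx)
  obtain ⟨t, htS, htcount, hcover⟩ := TopologicalSpace.countable_cover_nhdsWithin (f := V)
    fun x hx => mem_nhdsWithin_of_mem_nhds ((hVopen x hx).mem_nhds (hxV x hx))
  obtain ⟨c, rfl⟩ := htcount.exists_eq_range <| by
    obtain ⟨x, hx, -⟩ := Set.mem_iUnion₂.mp (hcover hx₀)
    exact ⟨x, hx⟩
  have hcS (k : ℕ) : c k ∈ S := htS (Set.mem_range_self k)
  have hex (x : X) : ∃ k, x ∈ V (c k) ∨ x ∉ ⋃ j, V (c j) := by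
    by_cases hx : x ∈ ⋃ j, V (c j)
    · exact (Set.mem_iUnion.mp hx).imp fun _ => Or.inl
    · exact ⟨0, Or.inr hx⟩
  refine ⟨fun x => y (c (Nat.find (hex x))), ?_, fun x hx => ?_⟩
  · exact Measurable.find (f := fun k _ => y (c k))
      (p := fun k x => x ∈ V (c k) ∨ x ∉ ⋃ j, V (c j)) (fun _ => measurable_const)
      (fun k => (hVopen _ (hcS k)).measurableSet.union
        (isOpen_iUnion fun j => hVopen _ (hcS j)).measurableSet.compl) hex
  · rw [Set.biUnion_range] at hcover
    exact hVP _ (hcS _) ⟨(Nat.find_spec (hex x)).resolve_right (not_not.mpr (hcover hx)), hx⟩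

end MeasurableSelection

section Coupling

variable {Ω X : Type*} [MeasurableSpace Ω] [MeasurableSpace X]

theorem measurable_map_prodMk_left {Y : Type*} [MeasurableSpace Y] (l : Measure Ω) [SFinite l]
    {F : X → Ω → Y} (hF : Measurable (Function.uncurry F)) : Measurable fun x => l.map (F x) := by
  have hmap : (fun x => l.map (F x)) =
      fun x => (l.map (Prod.mk x)).map (Function.uncurry F) := funext fun x =>
    (Measure.map_map hF measurable_prodMk_left).symm
  rw [hmap]
  exact (Measure.measurable_map _ hF).comp Measurable.map_prodMk_left

theorem IsCoupling.prod (μ ν : Measure X) [IsProbabilityMeasure μ] [IsProbabilityMeasure ν] :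
    IsCoupling (μ.prod ν) μ ν :=
  ⟨by simp, by simp⟩

theorem IsCoupling.map_prodMk (l : Measure Ω) {f g : Ω → X} (hf : Measurable f)
    (hg : Measurable g) : IsCoupling (l.map fun ω => (f ω, g ω)) (l.map f) (l.map g) :=
  ⟨Measure.map_map measurable_fst (hf.prodMk hg), Measure.map_map measurable_snd (hf.prodMk hg)⟩

theorem IsCoupling.add {η η' : Measure (X × X)} {μ μ' ν ν' : Measure X} (h : IsCoupling η μ ν)
    (h' : IsCoupling η' μ' ν') : IsCoupling (η + η') (μ + μ') (ν + ν') :=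
  ⟨by rw [Measure.map_add _ _ measurable_fst, h.1, h'.1],
    by rw [Measure.map_add _ _ measurable_snd, h.2, h'.2]⟩

theorem IsCoupling.const_smul {η : Measure (X × X)} {μ ν : Measure X} (h : IsCoupling η μ ν)
    (c : ℝ≥0∞) : IsCoupling (c • η) (c • μ) (c • ν) :=
  ⟨by rw [Measure.map_smul, h.1], by rw [Measure.map_smul, h.2]⟩

theorem IsCoupling.sum {ι : Type*} {s : Finset ι} {η : ι → Measure (X × X)} {μ ν : ι → Measure X}
    (h : ∀ i ∈ s, IsCoupling (η i) (μ i) (ν i)) :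
    IsCoupling (∑ i ∈ s, η i) (∑ i ∈ s, μ i) (∑ i ∈ s, ν i) :=
  ⟨by rw [Measure.map_finset_sum measurable_fst.aemeasurable, Finset.sum_congr rfl (h · · |>.1)],
    by rw [Measure.map_finset_sum measurable_snd.aemeasurable, Finset.sum_congr rfl (h · · |>.2)]⟩

theorem map_bind_of_map_eq {Y Z : Type*} [MeasurableSpace Y] [MeasurableSpace Z]
    {Q : Ω → Measure Y} {K : X → Measure Z} {f : Ω → X} {g : Y → Z} (η : Measure Ω)
    (hQ : Measurable Q) (hK : Measurable K) (hf : Measurable f) (hg : Measurable g)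
    (h : ∀ ω, (Q ω).map g = K (f ω)) : (η.bind Q).map g = (η.map f).bind K := by
  ext B hB
  rw [Measure.map_apply hg hB, Measure.bind_apply (hg hB) hQ.aemeasurable,
    Measure.bind_apply hB hK.aemeasurable,
    lintegral_map (f := fun x => K x B) ((Measure.measurable_coe hB).comp hK) hf]
  simp only [← h, Measure.map_apply hg hB]

theorem IsCoupling.bind {η : Measure (X × X)} {μ ν : Measure X} (h : IsCoupling η μ ν)
    {Q : X × X → Measure (X × X)} {K : X → Measure X} (hQ : Measurable Q)
    (hQK : ∀ z, IsCoupling (Q z) (K z.1) (K z.2)) :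
    IsCoupling (η.bind Q) (μ.bind K) (ν.bind K) := by
  have hK : Measurable K := by
    have hfst : K = fun x => (Q (x, x)).map Prod.fst := funext fun x => (hQK (x, x)).1.symm
    rw [hfst]
    exact (Measure.measurable_map _ measurable_fst).comp
      (hQ.comp (measurable_id.prodMk measurable_id))
  exact ⟨by rw [map_bind_of_map_eq η hQ hK measurable_fst measurable_fst fun z => (hQK z).1, h.1],
    by rw [map_bind_of_map_eq η hQ hK measurable_snd measurable_snd fun z => (hQK z).2, h.2]⟩

theorem IsCoupling.isProbabilityMeasure {η : Measure (X × X)} {μ ν : Measure X}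
    [IsProbabilityMeasure μ] (h : IsCoupling η μ ν) : IsProbabilityMeasure η := by
  refine ⟨?_⟩
  rw [← Set.preimage_univ (f := Prod.fst), ← Measure.map_apply measurable_fst .univ, h.1,
    measure_univ]

theorem IsCoupling.ae_mem {η : Measure (X × X)} {μ ν : Measure X} (h : IsCoupling η μ ν)
    {S : Set X} (hμ : μ Sᶜ = 0) (hν : ν Sᶜ = 0) : ∀ᵐ z ∂η, z.1 ∈ S ∧ z.2 ∈ S :=
  (ae_of_ae_map measurable_fst.aemeasurable (h.1.symm ▸ hμ)).and
    (ae_of_ae_map measurable_snd.aemeasurable (h.2.symm ▸ hν))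

theorem lintegral_bind_le_of_ae_le (η : Measure Ω) [IsProbabilityMeasure η] {Q : Ω → Measure X}
    {f : X → ℝ≥0∞} {g : Ω → ℝ≥0∞} {c ε : ℝ≥0∞} (hc : c ≠ ⊤)
    (h : ∀ᵐ ω ∂η, ∫⁻ x, f x ∂Q ω ≤ c * g ω + ε) :
    ∫⁻ x, f x ∂(η.bind Q) ≤ c * ∫⁻ ω, g ω ∂η + ε := by
  calc ∫⁻ x, f x ∂(η.bind Q) ≤ ∫⁻ ω, ∫⁻ x, f x ∂Q ω ∂η := Measure.lintegral_bind_le f η Q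
    _ ≤ ∫⁻ ω, (c * g ω + ε) ∂η := lintegral_mono_ae h
    _ = c * ∫⁻ ω, g ω ∂η + ε := by
      rw [lintegral_add_right _ measurable_const, lintegral_const_mul' _ _ hc, lintegral_const,
        measure_univ, mul_one]

theorem wassersteinE_le_rpow {d : X → X → ℝ≥0∞} {p : ℝ} (hp : 0 < p) {μ ν : Measure X}
    {C : ℝ≥0∞} (h : ∀ ε ≠ 0, ∃ η, IsCoupling η μ ν ∧ ∫⁻ z, d z.1 z.2 ^ p ∂η ≤ C + ε) :
    wassersteinE d p μ ν ≤ C ^ (1 / p) := by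
  rw [one_div, ENNReal.le_rpow_inv_iff hp]
  refine ENNReal.le_of_forall_pos_le_add fun ε hε _ => ?_
  obtain ⟨η, hη, hle⟩ := h ε (ENNReal.coe_ne_zero.mpr hε.ne')
  refine ((ENNReal.le_rpow_inv_iff hp).mp ?_).trans hle
  rw [← one_div]
  exact iInf₂_le η hη

theorem wassersteinE_bind_le {d : X → X → ℝ≥0∞} {p : ℝ} (hp : 0 < p) {c : ℝ≥0∞} (hc : c ≠ ⊤)
    {S : Set X} {K : X → Measure X}
    (hK : ∀ ε ≠ 0, ∃ Q : X × X → Measure (X × X), Measurable Q ∧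
      (∀ z, IsCoupling (Q z) (K z.1) (K z.2)) ∧
      ∀ x ∈ S, ∀ y ∈ S, ∫⁻ w, d w.1 w.2 ^ p ∂Q (x, y) ≤ c * d x y ^ p + ε)
    {μ ν : Measure X} [IsProbabilityMeasure μ] [IsProbabilityMeasure ν] (hμ : μ Sᶜ = 0)
    (hν : ν Sᶜ = 0) :
    wassersteinE d p (μ.bind K) (ν.bind K) ≤ c ^ (1 / p) * wassersteinE d p μ ν := by
  have hcoupling (η : Measure (X × X)) (hη : IsCoupling η μ ν) :
      wassersteinE d p (μ.bind K) (ν.bind K) ≤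
        c ^ (1 / p) * (∫⁻ z, d z.1 z.2 ^ p ∂η) ^ (1 / p) := by
    have := hη.isProbabilityMeasure
    rw [← ENNReal.mul_rpow_of_nonneg _ _ (by positivity)]
    refine wassersteinE_le_rpow hp fun ε hε => ?_
    obtain ⟨Q, hQ, hQK, hcost⟩ := hK ε hε
    exact ⟨η.bind Q, hη.bind hQ hQK, lintegral_bind_le_of_ae_le η hc <|
      (hη.ae_mem hμ hν).mono fun z hz => hcost z.1 hz.1 z.2 hz.2⟩
  have : Nonempty {η // IsCoupling η μ ν} := ⟨⟨_, IsCoupling.prod μ ν⟩⟩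
  have hc' : c ^ (1 / p) ≠ ⊤ := ENNReal.rpow_ne_top_of_nonneg (by positivity) hc
  conv_rhs => rw [wassersteinE, iInf_subtype', ENNReal.mul_iInf fun h => absurd h hc']
  exact le_iInf fun η => hcoupling η.1 η.2

end Coupling

section AngleMeasure

theorem lintegral_Icc_comp_add_right {f : ℝ → ℝ≥0∞} {T : ℝ} (hT : 0 < T)
    (hf : Function.Periodic f T) (s : ℝ) :
    ∫⁻ θ in Set.Icc 0 T, f (θ + s) = ∫⁻ θ in Set.Icc 0 T, f θ := by
  have : Fact (0 < T) := ⟨hT⟩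
  have hcircle (a : ℝ) : ∫⁻ θ in Set.Ioc a (a + T), f θ = ∫⁻ t : AddCircle T, hf.lift t :=
    AddCircle.lintegral_preimage T a hf.lift
  rw [setLIntegral_congr Ioc_ae_eq_Icc.symm, setLIntegral_congr Ioc_ae_eq_Icc.symm]
  calc ∫⁻ θ in Set.Ioc 0 T, f (θ + s) = ∫⁻ θ in Set.Ioc s (s + T), f θ := by
        rw [← (measurePreserving_add_right volume s).setLIntegral_comp_preimage_emb
          (measurableEmbedding_addRight s) f, Set.preimage_add_const_Ioc, sub_self,
          add_sub_cancel_left]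
    _ = ∫⁻ θ in Set.Ioc 0 T, f θ := by rw [hcircle, ← hcircle 0, zero_add]

theorem map_restrict_Icc_comp_add_right {X : Type*} [MeasurableSpace X] {f : ℝ → X}
    (hf : Measurable f) {T : ℝ} (hT : 0 < T) (hper : Function.Periodic f T) (s : ℝ) :
    (volume.restrict (Set.Icc 0 T)).map (fun θ => f (θ + s)) =
      (volume.restrict (Set.Icc 0 T)).map f :=
  Measure.ext_of_lintegral _ fun g hg => by
    rw [lintegral_map (g := fun θ => f (θ + s)) hg (hf.comp (measurable_add_const s)),
      lintegral_map hg hf]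
    exact lintegral_Icc_comp_add_right hT (hper.comp g) s

/-- The part of the angle law `angleMeasure ρ` in excess of the constant density `r`, under which
the coupled walks rotate by equal angles; negative values of `ρ - r` are cut off to `0`. -/
def excessAngleMeasure (ρ : ℝ → ℝ) (r : ℝ) : Measure ℝ :=
  (volume.restrict (Set.Icc 0 (2 * Real.pi))).withDensity fun θ => ENNReal.ofReal (ρ θ - r)

instance (ρ : ℝ → ℝ) (r : ℝ) : SFinite (excessAngleMeasure ρ r) := by
  unfold excessAngleMeasure; infer_instance

variable {ρ : ℝ → ℝ} {r : ℝ}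

theorem angleMeasure_eq_uniform_add_excess (hr : 0 ≤ r)
    (hρ : ∀ᵐ θ ∂volume.restrict (Set.Icc 0 (2 * Real.pi)), r ≤ ρ θ) :
    angleMeasure ρ = ENNReal.ofReal r • volume.restrict (Set.Icc 0 (2 * Real.pi)) +
      excessAngleMeasure ρ r := by
  rw [excessAngleMeasure, ← withDensity_const, ← withDensity_add_left measurable_const]
  refine withDensity_congr_ae (hρ.mono fun θ hθ => ?_)
  rw [Pi.add_apply, ← ENNReal.ofReal_add hr (sub_nonneg.mpr hθ), add_sub_cancel]

theorem angleMeasure_univ (hρ : ∀ᵐ θ ∂volume.restrict (Set.Icc 0 (2 * Real.pi)), 0 ≤ ρ θ)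
    (hρint : ∫ θ in Set.Icc 0 (2 * Real.pi), ρ θ = 1) : angleMeasure ρ Set.univ = 1 := by
  rw [angleMeasure, withDensity_apply _ .univ, Measure.restrict_univ,
    ← ofReal_integral_eq_lintegral_ofReal (integrable_of_integral_eq_one hρint) hρ, hρint,
    ENNReal.ofReal_one]

theorem two_pi_mul_add_excessAngleMeasure_univ (hr : 0 ≤ r)
    (hρ : ∀ᵐ θ ∂volume.restrict (Set.Icc 0 (2 * Real.pi)), r ≤ ρ θ)
    (hρint : ∫ θ in Set.Icc 0 (2 * Real.pi), ρ θ = 1) :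
    ENNReal.ofReal (2 * Real.pi * r) + excessAngleMeasure ρ r Set.univ = 1 := by
  rw [← angleMeasure_univ (hρ.mono fun _ => hr.trans) hρint,
    angleMeasure_eq_uniform_add_excess hr hρ, Measure.add_apply, Measure.smul_apply,
    Measure.restrict_apply_univ, Real.volume_Icc, sub_zero, smul_eq_mul, ← ENNReal.ofReal_mul hr,
    mul_comm r]

end AngleMeasure

section KacCoupling

theorem inv_mul_add_mul_le_one_sub_div {N u v : ℝ≥0∞} (hN : 1 ≤ N) (hN' : N ≠ ⊤) (huv : u + v = 1)
    (a ε : ℝ≥0∞) :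
    N⁻¹ * (u * ((N - 1) * a + ε) + N * (v * a)) ≤ (1 - u / N) * a + ε := by
  have hN0 : N ≠ 0 := (one_pos.trans_le hN).ne'
  have hu : u ≤ 1 := huv ▸ le_self_add
  have hinv : N⁻¹ * N = 1 := ENNReal.inv_mul_cancel hN0 hN'
  have hcoeff : N⁻¹ * (u * (N - 1)) + v = 1 - u / N := by
    refine ENNReal.eq_sub_of_add_eq (ENNReal.div_ne_top (hu.trans_lt one_lt_top).ne hN0) ?_
    calc N⁻¹ * (u * (N - 1)) + v + u / N = N⁻¹ * (u * (N - 1 + 1)) + v := by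
          rw [div_eq_mul_inv]; ring
      _ = N⁻¹ * N * u + v := by rw [tsub_add_cancel_of_le hN]; ring
      _ = 1 := by rw [hinv, one_mul, huv]
  calc N⁻¹ * (u * ((N - 1) * a + ε) + N * (v * a))
      = (N⁻¹ * (u * (N - 1)) + N⁻¹ * N * v) * a + N⁻¹ * u * ε := by ring
    _ = (1 - u / N) * a + N⁻¹ * u * ε := by rw [hinv, one_mul, hcoeff]
    _ ≤ (1 - u / N) * a + ε := by
      gcongr
      exact mul_le_of_le_one_left zero_le (mul_le_one' (ENNReal.inv_le_one.mpr hN) hu)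

variable {n : ℕ}

instance matrixBorelSpace : BorelSpace (Matrix (Fin n) (Fin n) ℝ) :=
  inferInstanceAs (BorelSpace (Fin n → Fin n → ℝ))

instance matrixSecondCountableTopology : SecondCountableTopology (Matrix (Fin n) (Fin n) ℝ) :=
  inferInstanceAs (SecondCountableTopology (Fin n → Fin n → ℝ))

theorem continuousOn_DSO_kacRot_mul {i j : Fin n} (hij : i ≠ j) (θ : ℝ) :
    ContinuousOn (fun z => DSO n z.1 (kacRot i j θ * z.2)) (SO n ×ˢ SO n) := by
  have hmaps : Set.MapsTo (fun z => (z.1, kacRot i j θ * z.2)) (SO n ×ˢ SO n) (SO n ×ˢ SO n) :=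
    fun z hz => ⟨hz.1, mul_mem_SO (kacRot_mem_SO hij θ) hz.2⟩
  have hcont : Continuous fun z : Matrix (Fin n) (Fin n) ℝ × Matrix (Fin n) (Fin n) ℝ =>
      (z.1, kacRot i j θ * z.2) :=
    continuous_fst.prodMk (continuous_const.matrix_mul continuous_snd)
  exact (continuousOn_DSO.comp hcont.continuousOn hmaps :)

theorem exists_measurable_sum_pairs_DSO_kacRot_mul_le (hn : 2 ≤ n) {ε : ℝ≥0∞} (hε : ε ≠ 0) :
    ∃ s : Matrix (Fin n) (Fin n) ℝ × Matrix (Fin n) (Fin n) ℝ → Fin n × Fin n → ℝ,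
      Measurable s ∧ ∀ z ∈ SO n ×ˢ SO n,
        ∑ p ∈ pairs n, DSO n z.1 (kacRot p.1 p.2 (s z p) * z.2) ^ (2 : ℝ) ≤
          ((n.choose 2 : ℝ≥0∞) - 1) * DSO n z.1 z.2 ^ (2 : ℝ) + ε := by
  refine exists_measurable_of_forall_eventually (S := SO n ×ˢ SO n)
    (P := fun z (s : Fin n × Fin n → ℝ) =>
      ∑ p ∈ pairs n, DSO n z.1 (kacRot p.1 p.2 (s p) * z.2) ^ (2 : ℝ) ≤
        ((n.choose 2 : ℝ≥0∞) - 1) * DSO n z.1 z.2 ^ (2 : ℝ) + ε) fun z hz => ?_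
  obtain ⟨s, hs⟩ := exists_sum_pairs_DSO_kacRot_mul_lt hn hz.1 hz.2 hε
  have hsum : ContinuousOn
      (fun z => ∑ p ∈ pairs n, DSO n z.1 (kacRot p.1 p.2 (s p) * z.2) ^ (2 : ℝ))
      (SO n ×ˢ SO n) :=
    continuousOn_finsetSum _ fun p hp => ENNReal.continuous_rpow_const.comp_continuousOn
      (continuousOn_DSO_kacRot_mul (ne_of_mem_pairs hp) (s p))
  have hbound : ContinuousOn
      (fun z => ((n.choose 2 : ℝ≥0∞) - 1) * DSO n z.1 z.2 ^ (2 : ℝ) + ε) (SO n ×ˢ SO n) :=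
    ((ENNReal.continuous_const_mul (by simp)).comp_continuousOn
      (ENNReal.continuous_rpow_const.comp_continuousOn continuousOn_DSO)).add continuousOn_const
  exact ⟨s, ((hsum z hz).eventually_lt (hbound z hz) hs).mono fun _ => le_of_lt⟩

/-- A joint step of two Kac walks from `z.1` and `z.2`: both rotate in the same uniformly chosen
coordinate plane `p`. Under the part `l₁` of the angle law the second angle is the first one
shifted by `s p`, under the part `l₂` the two angles agree. -/
def kacCoupling (n : ℕ) (l₁ l₂ : Measure ℝ) (s : Fin n × Fin n → ℝ)
    (z : Matrix (Fin n) (Fin n) ℝ × Matrix (Fin n) (Fin n) ℝ) :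
    Measure (Matrix (Fin n) (Fin n) ℝ × Matrix (Fin n) (Fin n) ℝ) :=
  (n.choose 2 : ℝ≥0∞)⁻¹ • ∑ p ∈ pairs n,
    (l₁.map (fun θ => (kacRot p.1 p.2 θ * z.1, kacRot p.1 p.2 (θ + s p) * z.2)) +
      l₂.map (fun θ => (kacRot p.1 p.2 θ * z.1, kacRot p.1 p.2 θ * z.2)))

theorem measurable_kacRot_mul {Ω : Type*} [MeasurableSpace Ω] (i j : Fin n) {θ : Ω → ℝ}
    {x : Ω → Matrix (Fin n) (Fin n) ℝ} (hθ : Measurable θ) (hx : Measurable x) :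
    Measurable fun ω => kacRot i j (θ ω) * x ω := by
  have hmul : Measurable fun w : ℝ × Matrix (Fin n) (Fin n) ℝ => kacRot i j w.1 * w.2 :=
    (((continuous_kacRot i j).comp continuous_fst).matrix_mul continuous_snd).measurable
  exact (hmul.comp (hθ.prodMk hx) :)

theorem isCoupling_kacCoupling {ρ : ℝ → ℝ} {c : ℝ≥0∞} {l : Measure ℝ}
    (hl : angleMeasure ρ = c • volume.restrict (Set.Icc 0 (2 * Real.pi)) + l)
    (s : Fin n × Fin n → ℝ) (z : Matrix (Fin n) (Fin n) ℝ × Matrix (Fin n) (Fin n) ℝ) :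
    IsCoupling (kacCoupling n (c • volume.restrict (Set.Icc 0 (2 * Real.pi))) l s z)
      (kacKernelRho n ρ z.1) (kacKernelRho n ρ z.2) := by
  refine (IsCoupling.sum fun p _ => ?_).const_smul _
  have hrot (x : Matrix (Fin n) (Fin n) ℝ) : Measurable fun θ => kacRot p.1 p.2 θ * x :=
    measurable_kacRot_mul p.1 p.2 measurable_id measurable_const
  rw [hl, Measure.map_add _ _ (hrot z.1), Measure.map_add _ _ (hrot z.2)]
  refine IsCoupling.add ?_ (.map_prodMk _ (hrot z.1) (hrot z.2))
  rw [Measure.map_smul (f := fun θ => kacRot p.1 p.2 θ * z.2),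
    ← map_restrict_Icc_comp_add_right (hrot z.2) Real.two_pi_pos
      (fun θ => by rw [kacRot_add_two_pi]) (s p), ← Measure.map_smul]
  exact .map_prodMk _ (hrot z.1) ((hrot z.2).comp (measurable_add_const _))

theorem measurable_kacCoupling (l₁ l₂ : Measure ℝ) [SFinite l₁] [SFinite l₂]
    {s : Matrix (Fin n) (Fin n) ℝ × Matrix (Fin n) (Fin n) ℝ → Fin n × Fin n → ℝ}
    (hs : Measurable s) : Measurable fun z => kacCoupling n l₁ l₂ (s z) z := by
  have hsmul : Measurable fun η : Measure (Matrix (Fin n) (Fin n) ℝ × Matrix (Fin n) (Fin n) ℝ) =>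
      (n.choose 2 : ℝ≥0∞)⁻¹ • η :=
    Measure.measurable_of_measurable_coe _ fun B hB => (Measure.measurable_coe hB).const_mul _
  have hs' (p : Fin n × Fin n) : Measurable fun z => s z p := (measurable_pi_apply p).comp hs
  have hshifted (p : Fin n × Fin n) : Measurable fun z =>
      l₁.map fun θ => (kacRot p.1 p.2 θ * z.1, kacRot p.1 p.2 (θ + s z p) * z.2) :=
    measurable_map_prodMk_left l₁ <|
      (measurable_kacRot_mul p.1 p.2 measurable_snd measurable_fst.fst).prodMk <|
        measurable_kacRot_mul p.1 p.2 (measurable_snd.add ((hs' p).comp measurable_fst))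
          measurable_fst.snd
  have hparallel (p : Fin n × Fin n) :
      Measurable fun z : Matrix (Fin n) (Fin n) ℝ × Matrix (Fin n) (Fin n) ℝ =>
        l₂.map fun θ => (kacRot p.1 p.2 θ * z.1, kacRot p.1 p.2 θ * z.2) :=
    measurable_map_prodMk_left l₂ <|
      (measurable_kacRot_mul p.1 p.2 measurable_snd measurable_fst.fst).prodMk <|
        measurable_kacRot_mul p.1 p.2 measurable_snd measurable_fst.snd
  exact (hsmul.comp (Finset.measurable_fun_sum (pairs n) fun p _ =>
    (hshifted p).add (hparallel p)) :)

theorem lintegral_kacCoupling_le (l₁ l₂ : Measure ℝ) (s : Fin n × Fin n → ℝ)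
    (x y : Matrix (Fin n) (Fin n) ℝ) :
    ∫⁻ w, DSO n w.1 w.2 ^ (2 : ℝ) ∂kacCoupling n l₁ l₂ s (x, y) ≤
      (n.choose 2 : ℝ≥0∞)⁻¹ *
        (l₁ Set.univ * ∑ p ∈ pairs n, DSO n x (kacRot p.1 p.2 (s p) * y) ^ (2 : ℝ) +
          n.choose 2 * (l₂ Set.univ * DSO n x y ^ (2 : ℝ))) := by
  have hshift (p) (hp : p ∈ pairs n) (θ : ℝ) :
      DSO n (kacRot p.1 p.2 θ * x) (kacRot p.1 p.2 (θ + s p) * y) =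
        DSO n x (kacRot p.1 p.2 (s p) * y) := by
    rw [kacRot_add (ne_of_mem_pairs hp), Matrix.mul_assoc, DSO_kacRot_mul (ne_of_mem_pairs hp)]
  have hterm (p) (hp : p ∈ pairs n) :
      ∫⁻ w, DSO n w.1 w.2 ^ (2 : ℝ)
          ∂(l₁.map (fun θ => (kacRot p.1 p.2 θ * x, kacRot p.1 p.2 (θ + s p) * y)) +
            l₂.map (fun θ => (kacRot p.1 p.2 θ * x, kacRot p.1 p.2 θ * y))) ≤
        l₁ Set.univ * DSO n x (kacRot p.1 p.2 (s p) * y) ^ (2 : ℝ) +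
          l₂ Set.univ * DSO n x y ^ (2 : ℝ) := by
    rw [lintegral_add_measure]
    refine add_le_add ((lintegral_map_le _ _).trans_eq ?_) ((lintegral_map_le _ _).trans_eq ?_)
    · simp only [hshift p hp, lintegral_const, mul_comm]
    · simp only [DSO_kacRot_mul (ne_of_mem_pairs hp), lintegral_const, mul_comm]
  rw [kacCoupling, lintegral_smul_measure, lintegral_finsetSum_measure, smul_eq_mul]
  gcongr
  refine (Finset.sum_le_sum hterm).trans_eq ?_
  rw [Finset.sum_add_distrib, Finset.mul_sum, Finset.sum_const, card_pairs, nsmul_eq_mul]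

theorem exists_coupling_kacKernelRho (hn : 2 ≤ n) {ρ : ℝ → ℝ} {r : ℝ} (hr : 0 ≤ r)
    (hρ : ∀ᵐ θ ∂volume.restrict (Set.Icc 0 (2 * Real.pi)), r ≤ ρ θ)
    (hρint : ∫ θ in Set.Icc 0 (2 * Real.pi), ρ θ = 1) {ε : ℝ≥0∞} (hε : ε ≠ 0) :
    ∃ Q : Matrix (Fin n) (Fin n) ℝ × Matrix (Fin n) (Fin n) ℝ →
        Measure (Matrix (Fin n) (Fin n) ℝ × Matrix (Fin n) (Fin n) ℝ), Measurable Q ∧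
      (∀ z, IsCoupling (Q z) (kacKernelRho n ρ z.1) (kacKernelRho n ρ z.2)) ∧
      ∀ x ∈ SO n, ∀ y ∈ SO n, ∫⁻ w, DSO n w.1 w.2 ^ (2 : ℝ) ∂Q (x, y) ≤
        (1 - ENNReal.ofReal (2 * Real.pi * r) / n.choose 2) * DSO n x y ^ (2 : ℝ) + ε := by
  obtain ⟨s, hs, hsle⟩ := exists_measurable_sum_pairs_DSO_kacRot_mul_le hn hε
  have hmass : (ENNReal.ofReal r • volume.restrict (Set.Icc 0 (2 * Real.pi))) Set.univ =
      ENNReal.ofReal (2 * Real.pi * r) := by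
    rw [Measure.smul_apply, Measure.restrict_apply_univ, Real.volume_Icc, sub_zero, smul_eq_mul,
      ← ENNReal.ofReal_mul hr, mul_comm]
  have hN : (1 : ℝ≥0∞) ≤ n.choose 2 := mod_cast one_le_choose_two hn
  refine ⟨_, measurable_kacCoupling _ _ hs, fun z => isCoupling_kacCoupling
    (angleMeasure_eq_uniform_add_excess hr hρ) (s z) z, fun x hx y hy => ?_⟩
  refine (lintegral_kacCoupling_le _ _ _ x y).trans <| le_trans ?_ <|
    inv_mul_add_mul_le_one_sub_div hN (ENNReal.natCast_ne_top _)
      (two_pi_mul_add_excessAngleMeasure_univ hr hρ hρint) _ ε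
  rw [hmass]
  gcongr
  exact hsle (x, y) ⟨hx, hy⟩

end KacCoupling

theorem kac_walk_nonuniform_contracting_general (n : ℕ) (hn : 2 ≤ n) (ρ : ℝ → ℝ)
    (hρint : ∫ θ in Set.Icc 0 (2 * Real.pi), ρ θ = 1) (r : ℝ) (hr : 0 ≤ r)
    (hρ : ∀ᵐ θ ∂volume.restrict (Set.Icc 0 (2 * Real.pi)), r ≤ ρ θ)
    (μ ν : Measure (Matrix (Fin n) (Fin n) ℝ)) [IsProbabilityMeasure μ] [IsProbabilityMeasure ν]
    (hμSO : μ (SO n)ᶜ = 0) (hνSO : ν (SO n)ᶜ = 0) :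
    wassersteinE (DSO n) 2 (μ.bind (kacKernelRho n ρ)) (ν.bind (kacKernelRho n ρ)) ≤
      ENNReal.ofReal (Real.sqrt (1 - 2 * Real.pi * r / (n.choose 2 : ℝ))) *
        wassersteinE (DSO n) 2 μ ν := by
  have hmass : 2 * Real.pi * r ≤ 1 := by
    rw [← ENNReal.ofReal_le_one, ← two_pi_mul_add_excessAngleMeasure_univ hr hρ hρint]
    exact le_self_add
  have hN : (0 : ℝ) < n.choose 2 := one_pos.trans_le (one_le_choose_two hn)
  have hfactor : 0 ≤ 1 - 2 * Real.pi * r / (n.choose 2 : ℝ) :=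
    sub_nonneg.mpr ((div_le_one hN).mpr (hmass.trans (one_le_choose_two hn)))
  have hofReal : ENNReal.ofReal (1 - 2 * Real.pi * r / (n.choose 2 : ℝ)) =
      1 - ENNReal.ofReal (2 * Real.pi * r) / n.choose 2 := by
    rw [ENNReal.ofReal_sub _ (by positivity), ENNReal.ofReal_one, ENNReal.ofReal_div_of_pos hN,
      ENNReal.ofReal_natCast]
  rw [Real.sqrt_eq_rpow, ← ENNReal.ofReal_rpow_of_nonneg hfactor (by norm_num), hofReal]
  exact wassersteinE_bind_le two_pos (hofReal ▸ ENNReal.ofReal_ne_top)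
    (fun ε hε => exists_coupling_kacKernelRho hn hr hρ hρint hε) hμSO hνSO

/-- The kernel `K^{(ρ)}` of Kac's walk with angle density `ρ ≥ ρ_min > 0` is
`√(1 - 2π ρ_min/C(n,2))`-contracting in the `L²` Wasserstein metric for the intrinsic
metric `D` on `SO(n)`. -/
theorem kac_walk_nonuniform_contracting (n : ℕ) (hn : 2 ≤ n)
    (ρ : ℝ → ℝ) (hρcont : ContinuousOn ρ (Set.Icc 0 (2 * Real.pi)))
    (hρint : ∫ θ in Set.Icc 0 (2 * Real.pi), ρ θ = 1)
    (ρmin : ℝ) (hρleast : IsLeast (ρ '' Set.Icc 0 (2 * Real.pi)) ρmin) (hρ0 : 0 < ρmin)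
    (μ ν : Measure (Matrix (Fin n) (Fin n) ℝ))
    (hμprob : IsProbabilityMeasure μ) (hνprob : IsProbabilityMeasure ν)
    (hμSO : μ (SO n)ᶜ = 0) (hνSO : ν (SO n)ᶜ = 0) :
    wassersteinE (DSO n) 2 (μ.bind (kacKernelRho n ρ)) (ν.bind (kacKernelRho n ρ)) ≤
      ENNReal.ofReal (Real.sqrt (1 - 2 * Real.pi * ρmin / (n.choose 2 : ℝ))) *
        wassersteinE (DSO n) 2 μ ν :=
  kac_walk_nonuniform_contracting_general n hn ρ hρint ρmin hρ0.le
    (ae_restrict_of_forall_mem measurableSet_Icc fun _ hθ =>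
      hρleast.2 (Set.mem_image_of_mem ρ hθ)) μ ν hμSO hνSO

end
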